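/- arXiv:1406.0373 — 3 statements merged into one kernel-verified Lean document; each statement's English description precedes it below -/
import Mathlib

section
/- Fix integers 2 ≤ d ≤ k ≤ n and m ≥ 0, and let Z(l) denote the number of d-stopping sets of size exactly l in the random bipartite graph ensemble. Then for every l with 0 ≤ l ≤ n, the expected number of d-stopping sets of size l equals E[Z(l)] = binom(n,l) · ( Σ_{s ∈ {0} ∪ {d, d+1, …, k}} binom(l,s)·binom(n−l,k−s) / binom(n,k) )^m. In particular, for d = 2, E[Z(l)] = binom(n,l) · (1 − l·binom(n−l,k−1)/binom(n,k))^m. -/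
open Filter Finset Asymptotics

noncomputable section

/-- Neighborhood `∂(a)` of constraint `a` in the bipartite graph given by `ω`. -/
def nbhd {n m k : ℕ} (ω : Fin m → (Fin k ↪ Fin n)) (a : Fin m) : Finset (Fin n) :=
  Finset.univ.image (ω a)

/-- `V` is a `d`-stopping set: every constraint meets `V` in `0` or at least `d` variables. -/
def IsStoppingSet {n m k : ℕ} (d : ℕ) (ω : Fin m → (Fin k ↪ Fin n))
    (V : Finset (Fin n)) : Prop :=
  ∀ a : Fin m, (nbhd ω a ∩ V).card = 0 ∨ d ≤ (nbhd ω a ∩ V).card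

/-- Probability of an event under the uniform random bipartite-graph ensemble:
each of the `m` constraints independently picks a uniformly random `k`-tuple of
distinct indices from `{1,…,n}` (an embedding `Fin k ↪ Fin n`). -/
def prG (n m k : ℕ) (P : (Fin m → (Fin k ↪ Fin n)) → Prop) : ℝ :=
  letI := Classical.decPred P
  ((Finset.univ.filter P).card : ℝ) / (Fintype.card (Fin m → (Fin k ↪ Fin n)) : ℝ)

/-- `u ∈ ω(1) ∩ o(n)`. -/
def UGood (u : ℕ → ℕ) : Prop :=
  Tendsto (fun n => (u n : ℝ)) atTop atTop ∧
    Tendsto (fun n => (u n : ℝ) / (n : ℝ)) atTop (nhds 0)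

/-- `μ_c(k,r) = binom(k,r)⁻¹ (r-2)^(r-2) / (r (r-1)^(r-1))`. -/
def muc (k r : ℕ) : ℝ :=
  ((k.choose r : ℝ))⁻¹ * (((r : ℝ) - 2) ^ (r - 2) / ((r : ℝ) * ((r : ℝ) - 1) ^ (r - 1)))

/-- `φ_{k,r}(μ,λ,τ) = μ (e^{(k-r+1)λ} - 1) binom(k,r-1) (1+τ)^{r-1} - λτ`. -/
def phiE (k r : ℕ) (μ lam τ : ℝ) : ℝ :=
  μ * (Real.exp (((k : ℝ) - (r : ℝ) + 1) * lam) - 1) * (k.choose (r - 1) : ℝ)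
      * (1 + τ) ^ (r - 1)
    - lam * τ

/-- Membership in the local marginal polytope LOCAL: each `B a` is a distribution on
`[q]^k`, each `b i` is a distribution on `[q]`, and the marginalization conditions hold. -/
def MemLOCAL {n m q k : ℕ} (nb : Fin m → (Fin k ↪ Fin n))
    (b : Fin n → Fin q → ℝ) (B : Fin m → (Fin k → Fin q) → ℝ) : Prop :=
  (∀ i x, 0 ≤ b i x) ∧ (∀ i, ∑ x, b i x = 1) ∧
  (∀ a z, 0 ≤ B a z) ∧ (∀ a, ∑ z, B a z = 1) ∧
  (∀ (a : Fin m) (j : Fin k) (x : Fin q),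
    b (nb a j) x = ∑ z : Fin k → Fin q, if z j = x then B a z else 0)

/-- A point of LOCAL is zero-optimal if each `B a` is supported on `f_a⁻¹(y_a)`. -/
def ZeroOptimal {m q k l : ℕ} (f : Fin m → (Fin k → Fin q) → (Fin l → Fin q))
    (y : Fin m → Fin l → Fin q) (B : Fin m → (Fin k → Fin q) → ℝ) : Prop :=
  ∀ a z, B a z ≠ 0 → f a z = y a

/-- Integral part of a point of LOCAL. -/
def integralPart {n q : ℕ} (b : Fin n → Fin q → ℝ) : Finset (Fin n) :=
  letI := Classical.decPred fun i : Fin n => ∃ x : Fin q, b i x = 1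
  Finset.univ.filter fun i : Fin n => ∃ x : Fin q, b i x = 1

/-- `f : [q]^k → [q]^l` is `w`-wise independent. -/
def WiseIndep (q k l w : ℕ) (f : (Fin k → Fin q) → (Fin l → Fin q)) : Prop :=
  ∀ T : Finset (Fin k), T.card ≤ w → ∀ xT : Fin k → Fin q, ∀ y : Fin l → Fin q,
    (Finset.univ.filter fun x : Fin k → Fin q =>
        (∀ i ∈ T, x i = xT i) ∧ f x = y).card
      = q ^ (k - T.card - l)

/-- Minimum Hamming distance of a code. -/
def minHammingDist {A : Type*} [DecidableEq A] {k : ℕ} (M : Finset (Fin k → A)) : ℕ :=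
  sInf {d | ∃ x ∈ M, ∃ y ∈ M, x ≠ y ∧ hammingDist x y = d}

/-- `M` is an MDS code of length `k` and dimension `r-1`. -/
def IsMDSCode (A : Type*) [Fintype A] [DecidableEq A] (k r : ℕ)
    (M : Finset (Fin k → A)) : Prop :=
  M.card = Fintype.card A ^ (r - 1) ∧ minHammingDist M = k - r + 2

/-- `f` has MDS inverse image of dimension `r-1`. -/
def HasMDSInv (q k r : ℕ) (f : (Fin k → Fin q) → (Fin (k - r + 1) → Fin q)) : Prop :=
  ∀ y : Fin (k - r + 1) → Fin q,
    IsMDSCode (Fin q) k r (Finset.univ.filter fun x => f x = y)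

instance {n m k : ℕ} (d : ℕ) (ω : Fin m → (Fin k ↪ Fin n)) :
    DecidablePred fun V : Finset (Fin n) => IsStoppingSet d ω V := fun V => by
  unfold IsStoppingSet; infer_instance

lemma aux_emb {n k : ℕ} (T : Finset (Fin n)) (hT : T.card = k) :
    (Finset.univ.filter fun e : Fin k ↪ Fin n => Finset.univ.image e = T).card = k.factorial := by
  have h1 : Fintype.card (Fin k ↪ T) = k.factorial := by
    rw [Fintype.card_embedding_eq]
    simp [hT, Nat.descFactorial_self]
  rw [← h1, ← Finset.card_univ]
  symm
  refine Finset.card_bij (fun f _ => f.trans (Function.Embedding.subtype _)) ?_ ?_ ?_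
  · intro f _
    simp only [Finset.mem_filter, Finset.mem_univ, true_and]
    apply Finset.eq_of_subset_of_card_le
    · intro x hx
      simp only [Finset.mem_image, Finset.mem_univ, true_and] at hx
      obtain ⟨i, rfl⟩ := hx
      exact (f i).2
    · rw [Finset.card_image_of_injective _ (Function.Embedding.injective _)]
      simp [hT]
  · intro f _ g _ h
    ext i
    have := DFunLike.congr_fun h i
    simpa using congrArg Fin.val this
  · intro e he
    simp only [Finset.mem_filter, Finset.mem_univ, true_and] at he
    refine ⟨⟨fun i => ⟨e i, by rw [← he]; simp⟩, ?_⟩, Finset.mem_univ _, ?_⟩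
    · intro i j hij
      exact e.injective (congrArg Subtype.val hij)
    · ext i
      rfl

lemma aux_sets {n k s : ℕ} (V : Finset (Fin n)) (hs : s ≤ k) :
    ((Finset.powersetCard k (Finset.univ : Finset (Fin n))).filter
      fun T => (T ∩ V).card = s).card
      = V.card.choose s * (n - V.card).choose (k - s) := by
  have hc : (Vᶜ).card = n - V.card := by simp [Finset.card_compl]
  rw [← hc, ← Finset.card_powersetCard, ← Finset.card_powersetCard, ← Finset.card_product]
  refine Finset.card_bij' (fun T _ => (T ∩ V, T \ V)) (fun p _ => p.1 ∪ p.2) ?_ ?_ ?_ ?_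
  · intro T hT
    simp only [Finset.mem_filter, Finset.mem_powersetCard, Finset.mem_product] at hT ⊢
    have := Finset.card_inter_add_card_sdiff T V
    refine ⟨⟨Finset.inter_subset_right, hT.2⟩, ?_, by omega⟩
    intro x hx
    simp at hx ⊢
    exact hx.2
  · rintro ⟨A, B⟩ h
    simp only [Finset.mem_filter, Finset.mem_powersetCard, Finset.mem_product] at h ⊢
    obtain ⟨⟨hA, hAc⟩, hB, hBc⟩ := h
    have hB' : ∀ x ∈ B, x ∉ V := fun x hx => by simpa using hB hx
    have hd : Disjoint A B := Finset.disjoint_left.2 fun x hx hx' => hB' x hx' (hA hx)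
    have e : (A ∪ B) ∩ V = A := by
      ext x
      have := @hA x
      have := hB' x
      simp only [Finset.mem_inter, Finset.mem_union]
      tauto
    refine ⟨⟨Finset.subset_univ _, ?_⟩, by rw [e, hAc]⟩
    rw [Finset.card_union_of_disjoint hd]
    omega
  · intro T _
    ext x
    simp only [Finset.mem_inter, Finset.mem_union, Finset.mem_sdiff]
    tauto
  · rintro ⟨A, B⟩ h
    simp only [Finset.mem_powersetCard, Finset.mem_product] at h
    obtain ⟨⟨hA, hAc⟩, hB, hBc⟩ := h
    have hB' : ∀ x ∈ B, x ∉ V := fun x hx => by simpa using hB hx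
    refine Prod.ext ?_ ?_ <;>
    · ext x
      have := @hA x
      have := hB' x
      simp only [Finset.mem_inter, Finset.mem_union, Finset.mem_sdiff]
      tauto

lemma aux_good {n k d : ℕ} (V : Finset (Fin n)) :
    (Finset.univ.filter fun e : Fin k ↪ Fin n =>
      (Finset.univ.image e ∩ V).card = 0 ∨ d ≤ (Finset.univ.image e ∩ V).card).card
      = (∑ s ∈ insert 0 (Finset.Icc d k),
          V.card.choose s * (n - V.card).choose (k - s)) * k.factorial := by
  have hk : ∀ e : Fin k ↪ Fin n, (Finset.univ.image e).card = k := fun e => by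
    rw [Finset.card_image_of_injective _ e.injective]; simp
  rw [Finset.card_eq_sum_card_fiberwise (f := fun e : Fin k ↪ Fin n => Finset.univ.image e)
    (t := (Finset.powersetCard k (Finset.univ : Finset (Fin n))).filter
      fun T => (T ∩ V).card = 0 ∨ d ≤ (T ∩ V).card)]
  · rw [Finset.sum_congr rfl (g := fun _ => k.factorial)]
    · rw [Finset.sum_const, smul_eq_mul]
      congr 1
      rw [Finset.card_eq_sum_card_fiberwise (f := fun T : Finset (Fin n) => (T ∩ V).card)
        (t := insert 0 (Finset.Icc d k))]
      · refine Finset.sum_congr rfl fun s hs => ?_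
        simp only [Finset.mem_insert, Finset.mem_Icc] at hs
        rw [← aux_sets V (by omega), Finset.filter_filter]
        congr 1
        refine Finset.filter_congr fun T _ => ?_
        constructor
        · exact fun h => h.2
        · exact fun h => ⟨by omega, h⟩
      · intro T hT
        simp only [Finset.coe_filter, Finset.mem_powersetCard, Set.mem_setOf_eq] at hT
        have := Finset.card_le_card (Finset.inter_subset_left (s₁ := T) (s₂ := V))
        simp only [Finset.coe_insert, Finset.coe_Icc, Set.mem_insert_iff, Set.mem_Icc]
        omega
    · intro T hT
      simp only [Finset.mem_filter, Finset.mem_powersetCard] at hT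
      rw [← aux_emb T hT.1.2, Finset.filter_filter]
      congr 1
      refine Finset.filter_congr fun e _ => ?_
      constructor
      · exact fun h => h.2
      · exact fun h => ⟨by rw [h]; exact hT.2, h⟩
  · intro e he
    simp only [Finset.coe_filter, Finset.mem_univ, true_and, Set.mem_setOf_eq] at he
    simp only [Finset.coe_filter, Finset.mem_powersetCard, Set.mem_setOf_eq]
    exact ⟨⟨Finset.subset_univ _, hk e⟩, he⟩

lemma aux_count {n m k d : ℕ} (V : Finset (Fin n)) :
    (Finset.univ.filter fun ω : Fin m → (Fin k ↪ Fin n) => IsStoppingSet d ω V).card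
      = ((∑ s ∈ insert 0 (Finset.Icc d k),
          V.card.choose s * (n - V.card).choose (k - s)) * k.factorial) ^ m := by
  rw [← aux_good V]
  have : (Finset.univ.filter fun ω : Fin m → (Fin k ↪ Fin n) => IsStoppingSet d ω V)
      = Fintype.piFinset fun _ : Fin m => (Finset.univ.filter fun e : Fin k ↪ Fin n =>
      (Finset.univ.image e ∩ V).card = 0 ∨ d ≤ (Finset.univ.image e ∩ V).card) := by
    ext ω
    simp only [Finset.mem_filter, Finset.mem_univ, true_and, Fintype.mem_piFinset]
    rfl
  rw [this, Fintype.card_piFinset]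
  simp

lemma aux_main (n m k d l : ℕ) (hkn : k ≤ n) :
    (∑ ω : Fin m → (Fin k ↪ Fin n),
        ((Finset.univ.filter fun V : Finset (Fin n) =>
            V.card = l ∧ IsStoppingSet d ω V).card : ℝ))
      / (Fintype.card (Fin m → (Fin k ↪ Fin n)) : ℝ)
    = (n.choose l : ℝ) *
        ((∑ s ∈ insert 0 (Finset.Icc d k),
            (l.choose s : ℝ) * ((n - l).choose (k - s) : ℝ)) / (n.choose k : ℝ)) ^ m := by
  have hsum : (∑ ω : Fin m → (Fin k ↪ Fin n),
        (Finset.univ.filter fun V : Finset (Fin n) => V.card = l ∧ IsStoppingSet d ω V).card)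
      = n.choose l * ((∑ s ∈ insert 0 (Finset.Icc d k),
          l.choose s * (n - l).choose (k - s)) * k.factorial) ^ m := by
    have h1 : ∀ ω : Fin m → (Fin k ↪ Fin n),
        (Finset.univ.filter fun V : Finset (Fin n) => V.card = l ∧ IsStoppingSet d ω V).card
        = ∑ V ∈ Finset.powersetCard l (Finset.univ : Finset (Fin n)),
          if IsStoppingSet d ω V then 1 else 0 := by
      intro ω
      rw [← Finset.card_filter]
      congr 1
      ext V
      simp [Finset.mem_powersetCard]
    rw [Finset.sum_congr rfl fun ω _ => h1 ω, Finset.sum_comm]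
    rw [Finset.sum_congr rfl (g := fun _ => ((∑ s ∈ insert 0 (Finset.Icc d k),
          l.choose s * (n - l).choose (k - s)) * k.factorial) ^ m)]
    · simp
    · intro V hV
      rw [Finset.mem_powersetCard] at hV
      rw [← Finset.card_filter, aux_count, hV.2]
  have hcard : Fintype.card (Fin m → (Fin k ↪ Fin n)) = (n.choose k * k.factorial) ^ m := by
    rw [Fintype.card_fun, Fintype.card_embedding_eq]
    simp [Nat.descFactorial_eq_factorial_mul_choose, mul_comm]
  rw [← Nat.cast_sum, hsum, hcard]
  push_cast
  have hf : (k.factorial : ℝ) ≠ 0 := by positivity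
  rw [mul_div_assoc, ← div_pow, mul_div_mul_right _ _ hf]

/-- exact formula for the expected number `E[Z(l)]` of `d`-stopping sets of
size `l` in the random bipartite graph ensemble, and its specialization to `d = 2`. -/
theorem stmt8 (n m k d l : ℕ) (hd : 2 ≤ d) (hdk : d ≤ k) (hkn : k ≤ n) (hl : l ≤ n) :
    (∑ ω : Fin m → (Fin k ↪ Fin n),
        ((Finset.univ.filter fun V : Finset (Fin n) =>
            V.card = l ∧ IsStoppingSet d ω V).card : ℝ))
      / (Fintype.card (Fin m → (Fin k ↪ Fin n)) : ℝ)
    = (n.choose l : ℝ) *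
        ((∑ s ∈ insert 0 (Finset.Icc d k),
            (l.choose s : ℝ) * ((n - l).choose (k - s) : ℝ)) / (n.choose k : ℝ)) ^ m ∧
    (d = 2 →
      (∑ ω : Fin m → (Fin k ↪ Fin n),
          ((Finset.univ.filter fun V : Finset (Fin n) =>
              V.card = l ∧ IsStoppingSet d ω V).card : ℝ))
        / (Fintype.card (Fin m → (Fin k ↪ Fin n)) : ℝ)
      = (n.choose l : ℝ) *
          (1 - (l : ℝ) * ((n - l).choose (k - 1) : ℝ) / (n.choose k : ℝ)) ^ m) := by
  refine ⟨aux_main n m k d l hkn, ?_⟩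
  rintro rfl
  rw [aux_main n m k 2 l hkn]
  congr 2
  have hpos : (n.choose k : ℝ) ≠ 0 := by
    exact_mod_cast (Nat.choose_pos hkn).ne'
  have hv : (∑ s ∈ Finset.range (k + 1), (l.choose s) * ((n - l).choose (k - s)))
      = n.choose k := by
    rw [← Finset.Nat.sum_antidiagonal_eq_sum_range_succ
      (fun i j => l.choose i * (n - l).choose j), ← Nat.add_choose_eq]
    congr 1
    omega
  have hr : Finset.range (k + 1) = insert 1 (insert 0 (Finset.Icc 2 k)) := by
    ext x
    simp only [Finset.mem_range, Finset.mem_insert, Finset.mem_Icc]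
    omega
  rw [hr, Finset.sum_insert (by simp), Nat.choose_one_right] at hv
  have hv' : (l : ℝ) * ((n - l).choose (k - 1) : ℝ) + ∑ s ∈ insert 0 (Finset.Icc 2 k),
      (l.choose s : ℝ) * ((n - l).choose (k - s) : ℝ) = (n.choose k : ℝ) := by
    exact_mod_cast hv
  rw [eq_sub_iff_add_eq, ← add_div, add_comm, hv', div_self hpos]
end
end

section
/- Fix integers k ≥ r ≥ 3, u ∈ ω(1) ∩ o(n), a constant μ > 0, and set m = ⌈μ·n^{r−1}/u(n)^{r−2}⌉. Consider the Markov chain for the upper bound (Ē(t), C̄_{k−r+2}(t),…,C̄_k(t)) driven by the random ensemble. Then for any constants τ > 0 and λ ∈ ℝ, log E[exp(λ·Ē(⌊τ·u(n)⌋))] = φ_{k,r}(μ,λ,τ)·u(n) + O(max{1, u(n)²/n}) as n → ∞, i.e., E[exp(λ·Ē(⌊τ·u(n)⌋))] = exp( φ_{k,r}(μ,λ,τ)·u(n) + O(max{1, u(n)²/n}) ). -/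
open Filter Finset Asymptotics

noncomputable section

/-- The binomial point mass `binom(n,i) p^i (1-p)^(n-i)`. -/
def binomPMF (n : ℕ) (p : ℝ) (i : ℕ) : ℝ := (n.choose i : ℝ) * p ^ i * (1 - p) ^ (n - i)

/-- `C_j(0)`: the number of constraints whose neighborhood meets the unknown
variables `{u+1,…,n}` in exactly `j` variables. -/
def Cinit (n m k u : ℕ) (ω : Fin m → (Fin k ↪ Fin n)) (j : ℕ) : ℕ :=
  (Finset.univ.filter fun a : Fin m =>
    ((nbhd ω a).filter fun i : Fin n => u ≤ (i : ℕ)).card = j).card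

/-- Initial state of the peeling Markov chains: `E(0) = ∑_{j=1}^{k-r+1} j C_j(0)` and
`C_j(0)` for every `j`. -/
def initState (n m k r u : ℕ) (ω : Fin m → (Fin k ↪ Fin n)) : ℤ × (ℕ → ℕ) :=
  (∑ j ∈ Finset.Icc 1 (k - r + 1), (j : ℤ) * (Cinit n m k u ω j : ℤ),
   fun j => Cinit n m k u ω j)

/-- Extend a vector `R : Fin (r-1) → ℕ` (indexed by `j = k-r+2,…,k`) to all of `ℕ` by `0`. -/
def Rext (k r : ℕ) (R : Fin (r - 1) → ℕ) (j : ℕ) : ℕ :=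
  if h : k - r + 2 ≤ j ∧ j - (k - r + 2) < r - 1 then R ⟨j - (k - r + 2), h.2⟩ else 0

/-- One-step transition operator (at time `t`) of the Markov chain for the upper bound:
`(T_t g)(s) = E[g(next state) | state at time t = s]`, where independently
`R̄_j ~ Binom(C̄_j, j/N(t))` for `j = k-r+2,…,k`, `C̄_k` is unchanged,
`C̄_j ← C̄_j + R̄_{j+1}` for `j = k-r+2,…,k-1`, and `Ē ← Ē - 1 + (k-r+1) R̄_{k-r+2}`. -/
def upperStep (k r n u t : ℕ) (g : ℤ × (ℕ → ℕ) → ℝ) (s : ℤ × (ℕ → ℕ)) : ℝ :=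
  ∑' R : Fin (r - 1) → ℕ,
    (∏ i : Fin (r - 1),
      binomPMF (s.2 (k - r + 2 + (i : ℕ)))
        (((k - r + 2 + (i : ℕ) : ℕ) : ℝ) / ((n : ℝ) - (u : ℝ) - (t : ℝ))) (R i)) *
    g (s.1 - 1 + ((k - r + 1 : ℕ) : ℤ) * (Rext k r R (k - r + 2) : ℤ),
       fun j => if k - r + 2 ≤ j ∧ j < k then s.2 j + Rext k r R (j + 1) else s.2 j)

/-- `upperIter k r n u s t g = T_s (T_{s+1} (⋯ (T_{s+t-1} g)))`, so that
`E[g(X_t)] = E[(upperIter k r n u 0 t g) (X_0)]` for the upper-bound chain. -/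
def upperIter (k r n u : ℕ) : ℕ → ℕ → (ℤ × (ℕ → ℕ) → ℝ) → ℤ × (ℕ → ℕ) → ℝ
  | _, 0, g => g
  | s, t + 1, g => upperStep k r n u s (upperIter k r n u (s + 1) t g)

/-- `E[g(X̄(t))]` for the upper-bound Markov chain driven by the random ensemble. -/
def upperE (k r n u m t : ℕ) (g : ℤ × (ℕ → ℕ) → ℝ) : ℝ :=
  (∑ ω : Fin m → (Fin k ↪ Fin n), upperIter k r n u 0 t g (initState n m k r u ω))
    / (Fintype.card (Fin m → (Fin k ↪ Fin n)) : ℝ)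

/-- One-step transition operator (at time `t`) of the Markov chain for the lower bound:
independently `R̲_j ~ Binom(C̲_j, j/N(t))` for `j = k-r+2,…,k` and
`S̲ ~ Binom(E̲+t, 1/(N(t)-k+r))`; then `C̲_k ← C̲_k - R̲_k`,
`C̲_j ← C̲_j - R̲_j + R̲_{j+1}` for `j = k-r+2,…,k-1`, and
`E̲ ← E̲ - 1 - S̲ + (k-r+1) R̲_{k-r+2}`. -/
def lowerStep (k r n u t : ℕ) (g : ℤ × (ℕ → ℕ) → ℝ) (s : ℤ × (ℕ → ℕ)) : ℝ :=
  ∑' RS : (Fin (r - 1) → ℕ) × ℕ,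
    ((∏ i : Fin (r - 1),
        binomPMF (s.2 (k - r + 2 + (i : ℕ)))
          (((k - r + 2 + (i : ℕ) : ℕ) : ℝ) / ((n : ℝ) - (u : ℝ) - (t : ℝ))) (RS.1 i)) *
      binomPMF (s.1 + (t : ℤ)).toNat
        (1 / ((n : ℝ) - (u : ℝ) - (t : ℝ) - (k : ℝ) + (r : ℝ))) RS.2) *
    g (s.1 - 1 - (RS.2 : ℤ) + ((k - r + 1 : ℕ) : ℤ) * (Rext k r RS.1 (k - r + 2) : ℤ),
       fun j => if k - r + 2 ≤ j ∧ j ≤ k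
         then s.2 j - Rext k r RS.1 j + Rext k r RS.1 (j + 1) else s.2 j)

/-- `lowerIter k r n u s t g = T_s (T_{s+1} (⋯ (T_{s+t-1} g)))` for the lower-bound chain. -/
def lowerIter (k r n u : ℕ) : ℕ → ℕ → (ℤ × (ℕ → ℕ) → ℝ) → ℤ × (ℕ → ℕ) → ℝ
  | _, 0, g => g
  | s, t + 1, g => lowerStep k r n u s (lowerIter k r n u (s + 1) t g)

/-- `E[g(X̲(t))]` for the lower-bound Markov chain driven by the random ensemble. -/
def lowerE (k r n u m t : ℕ) (g : ℤ × (ℕ → ℕ) → ℝ) : ℝ :=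
  (∑ ω : Fin m → (Fin k ↪ Fin n), lowerIter k r n u 0 t g (initState n m k r u ω))
    / (Fintype.card (Fin m → (Fin k ↪ Fin n)) : ℝ)

lemma binom_gen (C : ℕ) (p y : ℝ) :
    ∑ R ∈ Finset.range (C + 1), binomPMF C p R * y ^ R = (1 + p * (y - 1)) ^ C := by
  have h : 1 + p * (y - 1) = p * y + (1 - p) := by ring
  rw [h, add_pow]
  refine Finset.sum_congr rfl fun i _ => ?_
  unfold binomPMF
  rw [mul_pow]; ring

lemma Rext_val (d q : ℕ) (hd : 1 ≤ d) (R : Fin (q + 1 - 1) → ℕ) (i : ℕ) :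
    Rext (d + q) (q + 1) R (d + 1 + i) = if h : i < q then R ⟨i, h⟩ else 0 := by
  unfold Rext
  have e : d + q - (q + 1) + 2 = d + 1 := by omega
  have e2 : d + 1 + i - (d + q - (q + 1) + 2) = i := by omega
  by_cases h : i < q
  · rw [dif_pos h, dif_pos]
    · congr 1
      exact Fin.ext e2
    · constructor
      · omega
      · omega
  · rw [dif_neg h, dif_neg]
    rintro ⟨h1, h2⟩
    omega

lemma step_eq (d p : ℕ) (hd : 1 ≤ d) (n u t : ℕ) (A lam : ℝ) (y : ℕ → ℝ)
    (hy : y 0 = Real.exp (d * lam)) (s : ℤ × (ℕ → ℕ)) :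
    upperStep (d + (p + 1)) (p + 1 + 1) n u t
      (fun s => A * Real.exp (lam * s.1) *
        ∏ i : Fin (p + 1), y (i + 1) ^ s.2 (d + 1 + i)) s =
    A * Real.exp (-lam) * Real.exp (lam * s.1) * ∏ i : Fin (p + 1),
      (y (i + 1) * (1 + ((d + 1 + i : ℕ) : ℝ) / ((n : ℝ) - u - t) * (y i - 1)))
        ^ s.2 (d + 1 + i) := by
  unfold upperStep
  have e : d + (p + 1) - (p + 1 + 1) + 2 = d + 1 := by omega
  have e1 : d + (p + 1) - (p + 1 + 1) + 1 = d := by omega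
  simp only [e, e1]
  have key : ∀ R : Fin (p + 1) → ℕ,
      A * Real.exp (lam * ((s.1 - 1 + (d : ℤ) * (Rext (d + (p + 1)) (p + 1 + 1) R (d + 1) : ℤ) : ℤ) : ℝ)) *
        ∏ i : Fin (p + 1), y (i + 1) ^ (if d + 1 ≤ d + 1 + (i : ℕ) ∧ d + 1 + (i : ℕ) < d + (p + 1)
          then s.2 (d + 1 + i) + Rext (d + (p + 1)) (p + 1 + 1) R (d + 1 + i + 1) else s.2 (d + 1 + i))
      = A * Real.exp (-lam) * Real.exp (lam * s.1) * (∏ i : Fin (p + 1), y (i + 1) ^ s.2 (d + 1 + i))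
        * ∏ i : Fin (p + 1), y i ^ R i := by
    intro R
    have r0 : Rext (d + (p + 1)) (p + 1 + 1) R (d + 1) = R 0 := by
      have := Rext_val d (p + 1) hd R 0
      simpa using this
    have h1 : ∀ i : Fin (p + 1), y (i + 1) ^ (if d + 1 ≤ d + 1 + (i : ℕ) ∧ d + 1 + (i : ℕ) < d + (p + 1)
          then s.2 (d + 1 + i) + Rext (d + (p + 1)) (p + 1 + 1) R (d + 1 + i + 1) else s.2 (d + 1 + i))
        = y (i + 1) ^ s.2 (d + 1 + i) * y (i + 1) ^ (if h : (i : ℕ) + 1 < p + 1 then R ⟨i + 1, h⟩ else 0) := by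
      intro i
      have := Rext_val d (p + 1) hd R (i + 1)
      rw [show d + 1 + ((i : ℕ) + 1) = d + 1 + i + 1 by ring] at this
      rw [this]
      by_cases h : (i : ℕ) + 1 < p + 1
      · rw [if_pos (by omega), pow_add]
      · rw [if_neg (by omega), dif_neg h]; simp
    rw [Finset.prod_congr rfl fun i _ => h1 i, Finset.prod_mul_distrib, r0]
    have h2 : ∏ i : Fin (p + 1), y (i + 1) ^ (if h : (i : ℕ) + 1 < p + 1 then R ⟨i + 1, h⟩ else 0)
        = ∏ i : Fin p, y (i + 1) ^ R i.succ := by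
      rw [Fin.prod_univ_castSucc]
      simp
      refine Finset.prod_congr rfl fun i _ => ?_
      rfl
    have h3 : ∏ i : Fin (p + 1), y i ^ R i = Real.exp (d * lam) ^ R 0 * ∏ i : Fin p, y (i + 1) ^ R i.succ := by
      rw [Fin.prod_univ_succ]
      simp [hy]
    rw [h2, h3, ← Real.exp_nat_mul]
    push_cast
    have : lam * ((s.1 : ℝ) - 1 + d * (R 0)) = -lam + lam * s.1 + (R 0) * (d * lam) := by ring
    rw [this, Real.exp_add, Real.exp_add]
    ring
  have key2 := fun R => congrArg (fun z => (∏ i : Fin (p + 1),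
      binomPMF (s.2 (d + 1 + (i : ℕ)))
        (((d + 1 + (i : ℕ) : ℕ) : ℝ) / ((n : ℝ) - (u : ℝ) - (t : ℝ))) (R i)) * z) (key R)
  refine (tsum_congr key2).trans ?_
  change ∑' R : Fin (p + 1) → ℕ, _ = _
  rw [tsum_eq_sum (s := Fintype.piFinset fun i : Fin (p + 1) => Finset.range (s.2 (d + 1 + (i : ℕ)) + 1))]
  · have h4 : ∀ R : Fin (p + 1) → ℕ, (∏ i : Fin (p + 1),
      binomPMF (s.2 (d + 1 + (i : ℕ)))
        (((d + 1 + (i : ℕ) : ℕ) : ℝ) / ((n : ℝ) - (u : ℝ) - (t : ℝ))) (R i)) *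
        (A * Real.exp (-lam) * Real.exp (lam * s.1) * (∏ i : Fin (p + 1), y (i + 1) ^ s.2 (d + 1 + i))
        * ∏ i : Fin (p + 1), y i ^ R i) =
        (A * Real.exp (-lam) * Real.exp (lam * s.1) * (∏ i : Fin (p + 1), y (i + 1) ^ s.2 (d + 1 + i))) *
        ∏ i : Fin (p + 1), (binomPMF (s.2 (d + 1 + (i : ℕ)))
        (((d + 1 + (i : ℕ) : ℕ) : ℝ) / ((n : ℝ) - (u : ℝ) - (t : ℝ))) (R i) * y i ^ R i) := by
      intro R
      rw [Finset.prod_mul_distrib]; ring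
    rw [Finset.sum_congr rfl fun R _ => h4 R, ← Finset.mul_sum]
    rw [← Finset.prod_univ_sum (fun i : Fin (p + 1) => Finset.range (s.2 (d + 1 + (i : ℕ)) + 1))
      (fun i R => binomPMF (s.2 (d + 1 + (i : ℕ)))
        (((d + 1 + (i : ℕ) : ℕ) : ℝ) / ((n : ℝ) - (u : ℝ) - (t : ℝ))) R * y i ^ R)]
    rw [Finset.prod_congr rfl fun i _ => binom_gen _ _ _]
    simp only [mul_pow, Finset.prod_mul_distrib]
    ring
  · intro R hR
    simp only [Fintype.mem_piFinset, Finset.mem_range, not_forall] at hR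
    obtain ⟨i, hi⟩ := hR
    rw [Finset.prod_eq_zero (Finset.mem_univ i), zero_mul]
    unfold binomPMF
    rw [Nat.choose_eq_zero_of_lt (by omega)]
    simp

/-- Backward recursion for the generating-function parameters. -/
def Yq (d : ℕ) (lam : ℝ) (n u : ℕ) : ℕ → ℕ → ℕ → ℝ
  | _, 0, 0 => Real.exp (d * lam)
  | _, 0, _ + 1 => 1
  | _, _ + 1, 0 => Real.exp (d * lam)
  | s, t + 1, i + 1 => Yq d lam n u (s + 1) t (i + 1) *
      (1 + ((d + 1 + i : ℕ) : ℝ) / ((n : ℝ) - u - s) * (Yq d lam n u (s + 1) t i - 1))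

lemma Yq_zero (d : ℕ) (lam : ℝ) (n u s t : ℕ) : Yq d lam n u s t 0 = Real.exp (d * lam) := by
  cases t <;> simp [Yq]

lemma iter_eq (d p : ℕ) (hd : 1 ≤ d) (n u : ℕ) (lam : ℝ) (t : ℕ) : ∀ s : ℕ,
    upperIter (d + (p + 1)) (p + 1 + 1) n u s t (fun st => Real.exp (lam * (st.1 : ℝ))) =
    fun st => Real.exp (-lam) ^ t * Real.exp (lam * st.1) *
        ∏ i : Fin (p + 1), Yq d lam n u s t (i + 1) ^ st.2 (d + 1 + i) := by
  induction t with
  | zero => intro s; ext st; simp [upperIter, Yq]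
  | succ t ih =>
    intro s
    ext st
    rw [upperIter, ih (s + 1), step_eq d p hd n u s _ lam (Yq d lam n u (s + 1) t) (Yq_zero _ _ _ _ _ _)]
    simp only [Yq]
    ring

lemma card_emb_image (n k : ℕ) (s : Finset (Fin n)) (hs : s.card = k) :
    (Finset.univ.filter fun e : Fin k ↪ Fin n => Finset.univ.image e = s).card = k.factorial := by
  have h1 : Fintype.card (Fin k ↪ s) = k.factorial := by
    rw [Fintype.card_embedding_eq]
    simp [hs, Nat.descFactorial_self]
  rw [← h1, ← Finset.card_univ]
  symm
  refine Finset.card_bij (fun e _ => e.trans (Function.Embedding.subtype _)) ?_ ?_ ?_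
  · intro e _
    simp only [Finset.mem_filter, Finset.mem_univ, true_and]
    apply Finset.eq_of_subset_of_card_le
    · intro x hx
      simp only [Finset.mem_image, Finset.mem_univ, true_and] at hx
      obtain ⟨a, rfl⟩ := hx
      exact (e a).2
    · rw [Finset.card_image_of_injective _ (Function.Embedding.injective _)]
      simp [hs]
  · intro e _ e' _ h
    ext a
    have := DFunLike.congr_fun h a
    simpa using congrArg Fin.val this
  · intro e he
    simp only [Finset.mem_filter, Finset.mem_univ, true_and] at he
    refine ⟨⟨fun a => ⟨e a, ?_⟩, ?_⟩, Finset.mem_univ _, ?_⟩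
    · rw [← he]; simp
    · intro a b hab
      exact e.injective (congrArg Subtype.val hab)
    · ext a; rfl

lemma card_layer (n k j : ℕ) (hj : j ≤ k) (A : Finset (Fin n)) :
    ((Finset.powersetCard k (Finset.univ : Finset (Fin n))).filter
      fun s => (s ∩ A).card = j).card = A.card.choose j * (Aᶜ).card.choose (k - j) := by
  rw [← Finset.card_powersetCard, ← Finset.card_powersetCard, ← Finset.card_product]
  refine Finset.card_nbij' (fun s => (s ∩ A, s ∩ Aᶜ)) (fun p => p.1 ∪ p.2) ?_ ?_ ?_ ?_
  · intro s hs
    simp only [Finset.coe_filter, Finset.mem_powersetCard, Set.mem_ofPred_eq] at hs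
    simp only [Finset.coe_product, Set.mem_prod, Finset.mem_coe, Finset.mem_powersetCard]
    refine ⟨⟨Finset.inter_subset_right, hs.2⟩, Finset.inter_subset_right, ?_⟩
    have := Finset.card_inter_add_card_sdiff s A
    rw [Finset.sdiff_eq_inter_compl] at this
    omega
  · rintro ⟨a, b⟩ hp
    simp only [Finset.coe_product, Set.mem_prod, Finset.mem_coe, Finset.mem_powersetCard] at hp
    obtain ⟨⟨h1, h2⟩, h3, h4⟩ := hp
    have hdis : Disjoint a b := Finset.disjoint_of_subset_left h1
      (Finset.disjoint_of_subset_right h3 disjoint_compl_right)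
    simp only [Finset.coe_filter, Finset.mem_powersetCard, Set.mem_ofPred_eq]
    refine ⟨⟨Finset.subset_univ _, ?_⟩, ?_⟩
    · rw [Finset.card_union_of_disjoint hdis]; omega
    · rw [← h2]; congr 1
      ext x
      have := @h1 x
      have := @h3 x
      simp only [Finset.mem_inter, Finset.mem_union, Finset.mem_compl] at *
      tauto
  · intro s hs
    ext x; simp; tauto
  · rintro ⟨a, b⟩ hp
    simp only [Finset.coe_product, Set.mem_prod, Finset.mem_coe, Finset.mem_powersetCard] at hp
    obtain ⟨⟨h1, h2⟩, h3, h4⟩ := hp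
    refine Prod.ext ?_ ?_
    all_goals
      ext x
      have := @h1 x
      have := @h3 x
      simp only [Finset.mem_inter, Finset.mem_union, Finset.mem_compl] at *
      tauto

/-- Number of unknown variables in an embedding. -/
def hh (n k u : ℕ) (e : Fin k ↪ Fin n) : ℕ :=
  ((Finset.univ.image e).filter fun i : Fin n => u ≤ (i : ℕ)).card

lemma hh_le (n k u : ℕ) (e : Fin k ↪ Fin n) : hh n k u e ≤ k := by
  unfold hh
  refine (Finset.card_filter_le _ _).trans (Finset.card_image_le.trans ?_)
  simp

lemma card_unk (n u : ℕ) (h : u ≤ n) :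
    (Finset.univ.filter fun i : Fin n => u ≤ (i : ℕ)).card = n - u := by
  have h1 : (Finset.univ.filter fun i : Fin n => (i : ℕ) < u).card = u := by
    rw [Fin.card_filter_val_lt]; omega
  have h2 := Finset.card_filter_add_card_filter_not (s := (Finset.univ : Finset (Fin n)))
    (fun i : Fin n => (i : ℕ) < u)
  simp only [not_lt, Finset.card_univ, Fintype.card_fin] at h2
  omega

lemma card_hh (n k u j : ℕ) (hu : u ≤ n) (hj : j ≤ k) :
    (Finset.univ.filter fun e : Fin k ↪ Fin n => hh n k u e = j).card =
      k.factorial * ((n - u).choose j * u.choose (k - j)) := by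
  set A := Finset.univ.filter fun i : Fin n => u ≤ (i : ℕ) with hA
  have hAc : A.card = n - u := card_unk n u hu
  have hAc' : (Aᶜ).card = u := by
    rw [Finset.card_compl, hAc]; simp; omega
  have hcap : ∀ s : Finset (Fin n), (s.filter fun i : Fin n => u ≤ (i : ℕ)) = s ∩ A := by
    intro s; ext x; simp [hA]
  have h1 := card_layer n k j hj A
  rw [hAc, hAc'] at h1
  rw [← h1]
  rw [Finset.card_eq_sum_card_fiberwise (f := fun e : Fin k ↪ Fin n => Finset.univ.image e)
    (t := (Finset.powersetCard k (Finset.univ : Finset (Fin n))).filter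
      fun s => (s ∩ A).card = j)]
  · rw [mul_comm]
    apply Finset.sum_const_nat
    intro s hs
    simp only [Finset.mem_filter, Finset.mem_powersetCard] at hs
    rw [← card_emb_image n k s hs.1.2]
    congr 1
    ext e
    simp only [Finset.mem_filter, Finset.mem_univ, true_and, and_iff_right_iff_imp]
    intro he
    unfold hh
    rw [he, hcap]; exact hs.2
  · intro e he
    simp only [Finset.coe_filter, Finset.mem_univ, true_and, Set.mem_ofPred_eq] at he
    simp only [Finset.coe_filter, Finset.mem_powersetCard, Set.mem_ofPred_eq]
    refine ⟨⟨Finset.subset_univ _, ?_⟩, ?_⟩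
    · rw [Finset.card_image_of_injective _ e.injective]; simp
    · rw [← hcap]; exact he

/-- Weight of a constraint with `j` unknown variables. -/
def Wt (d : ℕ) (lam : ℝ) (Y : ℕ → ℝ) (j : ℕ) : ℝ :=
  if j ≤ d then Real.exp (lam * j) else Y (j - d)

lemma init_prod (d q n m u : ℕ) (hd : 1 ≤ d) (lam : ℝ) (Y : ℕ → ℝ)
    (ω : Fin m → (Fin (d + q) ↪ Fin n)) :
    Real.exp (lam * (initState n m (d + q) (q + 1) u ω).1) *
      ∏ i : Fin q, Y (i + 1) ^ (initState n m (d + q) (q + 1) u ω).2 (d + 1 + i) =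
    ∏ a, Wt d lam Y (hh n (d + q) u (ω a)) := by
  have e1 : d + q - (q + 1) + 1 = d := by omega
  have h1 : ∏ a, Wt d lam Y (hh n (d + q) u (ω a)) =
      ∏ j ∈ Finset.range (d + 1 + q), Wt d lam Y j ^ Cinit n m (d + q) u ω j := by
    rw [← Finset.prod_fiberwise_of_maps_to' (t := Finset.range (d + 1 + q))
      (g := fun a => hh n (d + q) u (ω a))]
    · refine Finset.prod_congr rfl fun j _ => ?_
      rw [Finset.prod_const]
      rfl
    · intro a _
      have := hh_le n (d + q) u (ω a)
      simp only [Finset.mem_range]; omega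
  rw [h1, Finset.prod_range_add]
  congr 1
  · simp only [initState, e1]
    have h2 : ∀ j ∈ Finset.range (d + 1), Wt d lam Y j ^ Cinit n m (d + q) u ω j
        = Real.exp (lam * (j * Cinit n m (d + q) u ω j)) := by
      intro j hj
      simp only [Finset.mem_range] at hj
      unfold Wt
      rw [if_pos (by omega), ← Real.exp_nat_mul]
      congr 1; ring
    rw [Finset.prod_congr rfl h2, ← Real.exp_sum, ← Finset.mul_sum]
    push_cast
    congr 2
    refine Finset.sum_subset ?_ ?_
    · intro x hx; simp at *; omega
    · intro x hx hx'
      have : x = 0 := by simp at *; omega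
      simp [this]
  · rw [Finset.prod_range]
    refine Finset.prod_congr rfl fun i _ => ?_
    unfold Wt
    rw [if_neg (by omega)]
    simp only [initState]
    congr 2; omega

lemma upperE_eq (d p n m u T : ℕ) (hd : 1 ≤ d) (lam : ℝ) (hu : u ≤ n) (hk : d + (p + 1) ≤ n) :
    upperE (d + (p + 1)) (p + 1 + 1) n u m T
      (fun st : ℤ × (ℕ → ℕ) => Real.exp (lam * (st.1 : ℝ))) =
    Real.exp (-lam) ^ T * (1 + ∑ j ∈ Finset.range (d + (p + 1) + 1),
      ((n - u).choose j : ℝ) * (u.choose (d + (p + 1) - j) : ℝ) / (n.choose (d + (p + 1)) : ℝ) *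
        (Wt d lam (Yq d lam n u 0 T) j - 1)) ^ m := by
  unfold upperE
  rw [iter_eq d p hd n u lam T 0]
  simp only [mul_assoc, init_prod d (p + 1) n m u hd lam]
  rw [← Finset.mul_sum, ← Fintype.sum_pow
    (fun e => Wt d lam (Yq d lam n u 0 T) (hh n (d + (p + 1)) u e))]
  rw [Fintype.card_fun, Fintype.card_fin, mul_div_assoc]
  congr 1
  push_cast
  rw [← div_pow]
  congr 1
  set k := d + (p + 1) with hkdef
  have hc : (Fintype.card (Fin k ↪ Fin n) : ℝ) = k.factorial * n.choose k := by
    rw [Fintype.card_embedding_eq]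
    simp only [Fintype.card_fin]
    rw [Nat.descFactorial_eq_factorial_mul_choose]; push_cast; rfl
  have hf : (k.factorial : ℝ) ≠ 0 := by positivity
  have hch : (n.choose k : ℝ) ≠ 0 := by
    have := Nat.choose_pos hk
    positivity
  have h1 : ∑ e : Fin k ↪ Fin n, Wt d lam (Yq d lam n u 0 T) (hh n k u e) =
      Fintype.card (Fin k ↪ Fin n) +
      ∑ e : Fin k ↪ Fin n, (Wt d lam (Yq d lam n u 0 T) (hh n k u e) - 1) := by
    rw [Finset.sum_sub_distrib]; simp
  rw [h1, add_div, div_self (by rw [hc]; positivity)]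
  congr 1
  rw [← Finset.sum_fiberwise_of_maps_to' (t := Finset.range (k + 1)) (g := fun e => hh n k u e)
    (f := fun j => Wt d lam (Yq d lam n u 0 T) j - 1), Finset.sum_div]
  · refine Finset.sum_congr rfl fun j hj => ?_
    rw [Finset.sum_const, card_hh n k u j hu (by simp at hj; omega), hc]
    simp only [nsmul_eq_mul]
    push_cast
    field_simp
  · intro e _
    have := hh_le n k u e
    simp only [Finset.mem_range]; omega

lemma growth (z : ℕ → ℝ) (a : ℝ) (ha : 0 ≤ a) (T : ℕ) (z0 : z 0 = 0)
    (h : ∀ t < T, |z (t + 1) - z t| ≤ a * (1 + |z t|)) :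
    ∀ t ≤ T, |z t| ≤ (1 + a) ^ t - 1 := by
  intro t
  induction t with
  | zero => intro _; simp [z0]
  | succ t ih =>
    intro ht
    have h1 := ih (by omega)
    have h2 := h t (by omega)
    have h3 : |z (t + 1)| ≤ |z (t + 1) - z t| + |z t| := by
      simpa using abs_add_le (z (t + 1) - z t) (z t)
    rw [pow_succ]
    nlinarith

lemma lin_growth (e : ℕ → ℝ) (b : ℝ) (T : ℕ) (e0 : e 0 = 0)
    (h : ∀ t < T, |e (t + 1) - e t| ≤ b) :
    ∀ t ≤ T, |e t| ≤ b * t := by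
  intro t
  induction t with
  | zero => intro _; simp [e0]
  | succ t ih =>
    intro ht
    have h1 := ih (by omega)
    have h2 := h t (by omega)
    have h3 : |e (t + 1)| ≤ |e (t + 1) - e t| + |e t| := by
      simpa using abs_add_le (e (t + 1) - e t) (e t)
    push_cast
    linarith

lemma growth' (z : ℕ → ℝ) (a G : ℝ) (ha : 0 ≤ a) (T : ℕ) (hG : a * T ≤ G) (z0 : z 0 = 0)
    (h : ∀ t < T, |z (t + 1) - z t| ≤ a * (1 + |z t|)) :
    ∀ t ≤ T, |z t| ≤ (a * T) * Real.exp G := by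
  intro t ht
  have h1 := growth z a ha T z0 h t ht
  have h2 : (1 + a) ^ t ≤ Real.exp (a * T) := by
    calc (1 + a) ^ t ≤ (Real.exp a) ^ t := by
          gcongr; linarith [Real.add_one_le_exp a]
      _ = Real.exp (t * a) := (Real.exp_nat_mul _ _).symm
      _ ≤ Real.exp (a * T) := by
          apply Real.exp_le_exp.2
          have : (t : ℝ) ≤ T := by exact_mod_cast ht
          nlinarith
  have h3 : Real.exp (a * T) - 1 ≤ a * T * Real.exp (a * T) := by
    have h4 := Real.add_one_le_exp (-(a * T))
    have h5 : Real.exp (-(a * T)) * Real.exp (a * T) = 1 := by rw [← Real.exp_add]; simp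
    nlinarith [Real.exp_pos (a * T)]
  have h4 : a * T * Real.exp (a * T) ≤ a * T * Real.exp G := by
    gcongr
  linarith

/-- Rising product. -/
def Dq (d i : ℕ) : ℝ := ∏ l ∈ Finset.range i, ((d + 1 + l : ℕ) : ℝ)

/-- Main term. -/
def Mq (d : ℕ) (lam : ℝ) (n i t : ℕ) : ℝ :=
  (Real.exp (d * lam) - 1) * Dq d i * (t.choose i : ℝ) / (n : ℝ) ^ i

lemma Mq_succ (d : ℕ) (lam : ℝ) (n i t : ℕ) :
    Mq d lam n (i + 1) (t + 1) - Mq d lam n (i + 1) t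
      = ((d + 1 + i : ℕ) : ℝ) / n * Mq d lam n i t := by
  unfold Mq Dq
  rw [Finset.prod_range_succ, Nat.choose_succ_succ, pow_succ]
  push_cast
  ring

set_option maxHeartbeats 1600000 in
lemma zbound (d : ℕ) (lam B : ℝ) (hB : 0 ≤ B) (i : ℕ) : ∃ K : ℝ, 0 ≤ K ∧
    ∀ n u T : ℕ, 1 ≤ u → (T : ℝ) ≤ B * u → 2 * (u + T) ≤ n → ∀ t ≤ T,
      |Yq d lam n u (T - t) t i - 1| ≤ K * ((u : ℝ) / n) ^ i ∧
      |Yq d lam n u (T - t) t i - 1 - Mq d lam n i t| ≤ K * ((u : ℝ) / n) ^ (i + 1) := by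
  induction i with
  | zero =>
    refine ⟨|Real.exp (d * lam) - 1|, abs_nonneg _, ?_⟩
    intro n u T hu hT hn t ht
    rw [Yq_zero]
    simp only [Mq, Dq]
    simp
    positivity
  | succ i ih =>
    obtain ⟨K, hK, ih⟩ := ih
    set c : ℝ := ((d + 1 + i : ℕ) : ℝ) with hc
    have hc0 : 0 ≤ c := by positivity
    set G : ℝ := 2 * c * B * K with hG
    have hG0 : 0 ≤ G := by positivity
    set K1 : ℝ := G * Real.exp G with hK1
    have hK10 : 0 ≤ K1 := by positivity
    set K2 : ℝ := (2 * c * (1 + B) * K * (1 + K1) + c * K * (K1 + 1)) * B with hK2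
    have hK20 : 0 ≤ K2 := by positivity
    refine ⟨K1 + K2, by positivity, ?_⟩
    intro n u T hu hT hn
    have hn0 : (0 : ℝ) < n := by
      have : 0 < n := by omega
      exact_mod_cast this
    have hu0 : (0 : ℝ) ≤ u := by positivity
    have hnR : 2 * ((u : ℝ) + T) ≤ n := by exact_mod_cast hn
    have hT0 : (0 : ℝ) ≤ T := by positivity
    set x : ℝ := (u : ℝ) / n with hx
    have hx0 : 0 ≤ x := by positivity
    have hx1 : x ≤ 1 := by rw [hx, div_le_one hn0]; linarith
    have hxn : x * n = u := by rw [hx]; field_simp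
    set z : ℕ → ℝ := fun t => Yq d lam n u (T - t) t i - 1 with hz
    set Z : ℕ → ℝ := fun t => Yq d lam n u (T - t) t (i + 1) - 1 with hZ
    set P : ℕ → ℝ := fun t => c / ((n : ℝ) - u - (T - (t + 1) : ℕ)) with hP
    have hrec : ∀ t < T, Z (t + 1) - Z t = P t * z t * (1 + Z t) := by
      intro t ht
      have e : T - (t + 1) + 1 = T - t := by omega
      simp only [hZ, hz, hP, hc, Yq, e]
      ring
    have hZ0 : Z 0 = 0 := by simp [hZ, Yq]
    have hs : ∀ t, ((T - (t + 1) : ℕ) : ℝ) ≤ T := by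
      intro t; exact_mod_cast Nat.sub_le _ _
    have hN : ∀ t, (n : ℝ) / 2 ≤ (n : ℝ) - u - (T - (t + 1) : ℕ) := by
      intro t; linarith [hs t]
    have hP0 : ∀ t, 0 ≤ P t := by
      intro t
      have := hN t
      exact div_nonneg hc0 (by linarith)
    have hP1 : ∀ t, P t ≤ 2 * c / n := by
      intro t
      have := hN t
      calc P t ≤ c / ((n : ℝ) / 2) := by
            apply div_le_div_of_nonneg_left hc0 (by positivity) this
        _ = 2 * c / n := by field_simp
    have hP2 : ∀ t, |P t - c / n| ≤ 2 * c * (1 + B) * x / n := by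
      intro t
      have h1 := hN t
      have h2 : (0 : ℝ) < (n : ℝ) - u - (T - (t + 1) : ℕ) := by linarith
      have h3 : P t - c / n = P t * ((u + (T - (t + 1) : ℕ)) / n) := by
        simp only [hP]
        field_simp
        ring
      rw [h3, abs_of_nonneg (mul_nonneg (hP0 t) (by positivity))]
      calc P t * ((u + (T - (t + 1) : ℕ)) / n) ≤ (2 * c / n) * ((u + B * u) / n) := by
            apply mul_le_mul (hP1 t) _ (by positivity) (by positivity)
            gcongr
            linarith [hs t]
        _ = 2 * c * (1 + B) * x / n := by rw [hx]; ring
    have hzb : ∀ t ≤ T, |z t| ≤ K * x ^ i := fun t ht => (ih n u T hu hT hn t ht).1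
    have heb : ∀ t ≤ T, |z t - Mq d lam n i t| ≤ K * x ^ (i + 1) :=
      fun t ht => (ih n u T hu hT hn t ht).2
    set a : ℝ := 2 * c / n * (K * x ^ i) with ha
    have ha0 : 0 ≤ a := by positivity
    have haT : a * T ≤ G * x ^ (i + 1) := by
      calc a * T ≤ a * (B * u) := by gcongr
        _ = G * x ^ (i + 1) := by rw [ha, hG, ← hxn, pow_succ]; field_simp
    have hxp : x ^ (i + 1) ≤ 1 := pow_le_one₀ hx0 hx1
    have haTG : a * T ≤ G := haT.trans (by nlinarith)
    have hPz : ∀ t < T, |P t * z t| ≤ a := by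
      intro t ht
      rw [abs_mul, abs_of_nonneg (hP0 t)]
      exact mul_le_mul (hP1 t) (hzb t ht.le) (abs_nonneg _) (by positivity)
    have h1Z : ∀ t, |1 + Z t| ≤ 1 + |Z t| := by
      intro t
      simpa using abs_add_le 1 (Z t)
    have hZb : ∀ t ≤ T, |Z t| ≤ K1 * x ^ (i + 1) := by
      intro t ht
      refine (growth' Z a G ha0 T haTG hZ0 ?_ t ht).trans ?_
      · intro t ht
        rw [hrec t ht, abs_mul]
        exact mul_le_mul (hPz t ht) (h1Z t) (abs_nonneg _) ha0
      · calc a * T * Real.exp G ≤ G * x ^ (i + 1) * Real.exp G := by gcongr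
          _ = K1 * x ^ (i + 1) := by rw [hK1]; ring
    set b : ℝ := (2 * c * (1 + B) * K * (1 + K1) + c * K * (K1 + 1)) * x ^ (i + 1) / n with hb
    have hEb : ∀ t ≤ T, |Z t - Mq d lam n (i + 1) t| ≤ b * t := by
      refine lin_growth (fun t => Z t - Mq d lam n (i + 1) t) b T ?_ ?_
      · simp [hZ0, Mq]
      · intro t ht
        have h1 : (Z (t + 1) - Mq d lam n (i + 1) (t + 1)) - (Z t - Mq d lam n (i + 1) t) =
            (P t - c / n) * (z t * (1 + Z t)) + c / n * (z t * Z t) +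
              c / n * (z t - Mq d lam n i t) := by
          have e1 := hrec t ht
          have e2 := Mq_succ d lam n i t
          rw [← hc] at e2
          linear_combination e1 - e2
        have hZK : |Z t| ≤ K1 := (hZb t ht.le).trans (by nlinarith)
        have hZx : |Z t| ≤ K1 * x := (hZb t ht.le).trans (by
          have : x ^ (i + 1) ≤ x := by
            rw [pow_succ]; nlinarith [pow_le_one₀ (n := i) hx0 hx1]
          gcongr)
        have g1 : |(P t - c / n) * (z t * (1 + Z t))| ≤
            2 * c * (1 + B) * x / n * (K * x ^ i * (1 + K1)) := by
          rw [abs_mul, abs_mul]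
          have := h1Z t
          have hh1 := hP2 t
          have hh2 := hzb t ht.le
          have hh3 : |1 + Z t| ≤ 1 + K1 := by linarith
          gcongr
        have g2 : |c / n * (z t * Z t)| ≤ c / n * (K * x ^ i * (K1 * x)) := by
          rw [abs_mul, abs_mul, abs_of_nonneg (by positivity : 0 ≤ c / n)]
          have hh2 := hzb t ht.le
          gcongr
        have g3 : |c / n * (z t - Mq d lam n i t)| ≤ c / n * (K * x ^ (i + 1)) := by
          rw [abs_mul, abs_of_nonneg (by positivity : 0 ≤ c / n)]
          have hh2 := heb t ht.le
          gcongr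
        change |(Z (t + 1) - Mq d lam n (i + 1) (t + 1)) - (Z t - Mq d lam n (i + 1) t)| ≤ b
        rw [h1]
        refine (abs_add_three _ _ _).trans ?_
        calc _ ≤ 2 * c * (1 + B) * x / n * (K * x ^ i * (1 + K1)) +
              c / n * (K * x ^ i * (K1 * x)) + c / n * (K * x ^ (i + 1)) := by gcongr
          _ = b := by rw [hb, pow_succ]; ring
    intro t ht
    constructor
    · refine (hZb t ht).trans ?_
      gcongr
      linarith
    · refine (hEb t ht).trans ?_
      have htB : (t : ℝ) ≤ B * u := le_trans (by exact_mod_cast ht) hT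
      calc b * t ≤ b * (B * u) := by gcongr
        _ = K2 * x ^ (i + 1 + 1) := by
          rw [hb, hK2, ← hxn, pow_succ x (i + 1)]; field_simp
        _ ≤ (K1 + K2) * x ^ (i + 1 + 1) := by gcongr; linarith

/-- Error scale. -/
def epsq (u : ℕ → ℕ) (n : ℕ) : ℝ := 1 / (u n : ℝ) + (u n : ℝ) / n

/-- `f = a + O(ε)`. -/
def Ap (u : ℕ → ℕ) (f : ℕ → ℝ) (a : ℝ) : Prop := (fun n => f n - a) =O[atTop] epsq u

lemma epsq_tendsto {u : ℕ → ℕ} (hu : UGood u) : Tendsto (epsq u) atTop (nhds 0) := by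
  have h1 : Tendsto (fun n => 1 / (u n : ℝ)) atTop (nhds 0) := by
    simp only [one_div]
    exact hu.1.inv_tendsto_atTop
  have h2 := h1.add hu.2
  rw [add_zero] at h2
  exact h2

lemma epsq_one {u : ℕ → ℕ} (hu : UGood u) : epsq u =O[atTop] (fun _ => (1 : ℝ)) :=
  (epsq_tendsto hu).isBigO_one ℝ

lemma Ap.tendsto {u : ℕ → ℕ} (hu : UGood u) {f : ℕ → ℝ} {a : ℝ} (h : Ap u f a) :
    Tendsto f atTop (nhds a) := by
  have := (IsBigO.trans_tendsto h (epsq_tendsto hu)).add_const a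
  simpa using this

lemma Ap.one {u : ℕ → ℕ} (hu : UGood u) {f : ℕ → ℝ} {a : ℝ} (h : Ap u f a) :
    f =O[atTop] (fun _ => (1 : ℝ)) := (h.tendsto hu).isBigO_one ℝ

lemma Ap.const (u : ℕ → ℕ) (a : ℝ) : Ap u (fun _ => a) a := by
  unfold Ap
  simp only [sub_self]
  exact isBigO_zero _ _

lemma Ap.add {u : ℕ → ℕ} {f g : ℕ → ℝ} {a b : ℝ} (hf : Ap u f a) (hg : Ap u g b) :
    Ap u (fun n => f n + g n) (a + b) := by
  refine (IsBigO.add hf hg).congr_left fun n => ?_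
  ring

lemma Ap.mul {u : ℕ → ℕ} (hu : UGood u) {f g : ℕ → ℝ} {a b : ℝ} (hf : Ap u f a) (hg : Ap u g b) :
    Ap u (fun n => f n * g n) (a * b) := by
  have h1 : (fun n => (f n - a) * g n) =O[atTop] epsq u := by
    simpa using IsBigO.mul hf (hg.one hu)
  have h2 : (fun n => a * (g n - b)) =O[atTop] epsq u := IsBigO.const_mul_left hg a
  refine (h1.add h2).congr_left fun n => ?_
  ring

lemma Ap.congr' {u : ℕ → ℕ} {f g : ℕ → ℝ} {a : ℝ} (hf : Ap u f a) (h : ∀ᶠ n in atTop, f n = g n) :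
    Ap u g a := by
  refine IsBigO.congr' hf ?_ EventuallyEq.rfl
  filter_upwards [h] with n hn
  rw [hn]

lemma Ap.inv {u : ℕ → ℕ} (hu : UGood u) {f : ℕ → ℝ} {a : ℝ} (ha : a ≠ 0) (hf : Ap u f a) :
    Ap u (fun n => (f n)⁻¹) a⁻¹ := by
  have h1 : (fun n => (f n)⁻¹) =O[atTop] (fun _ => (1 : ℝ)) :=
    ((hf.tendsto hu).inv₀ ha).isBigO_one ℝ
  have h2 : (fun n => (f n - a) * (f n)⁻¹) =O[atTop] epsq u := by
    simpa using IsBigO.mul hf h1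
  have h3 := h2.const_mul_left (-a⁻¹)
  refine IsBigO.congr' h3 ?_ EventuallyEq.rfl
  filter_upwards [(hf.tendsto hu).eventually_ne ha] with n hn
  field_simp
  ring

lemma Ap.sum {u : ℕ → ℕ} {ι : Type*} (s : Finset ι) (f : ι → ℕ → ℝ) (a : ι → ℝ)
    (h : ∀ i ∈ s, Ap u (f i) (a i)) : Ap u (fun n => ∑ i ∈ s, f i n) (∑ i ∈ s, a i) := by
  have := IsBigO.sum (A := fun i n => f i n - a i) (g := epsq u) (l := atTop) (s := s) h
  refine this.congr_left fun n => ?_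
  rw [Finset.sum_apply, Finset.sum_sub_distrib]

lemma Ap.of_bound {u : ℕ → ℕ} {f : ℕ → ℝ} {a : ℝ} (C : ℝ)
    (h : ∀ᶠ n in atTop, |f n - a| ≤ C * epsq u n) : Ap u f a := by
  refine IsBigO.of_bound C ?_
  filter_upwards [h] with n hn
  have : 0 ≤ epsq u n := by unfold epsq; positivity
  simpa [abs_of_nonneg this] using hn

lemma Ap.pow {u : ℕ → ℕ} (hu : UGood u) {f : ℕ → ℝ} {a : ℝ} (hf : Ap u f a) (i : ℕ) :
    Ap u (fun n => f n ^ i) (a ^ i) := by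
  induction i with
  | zero => simpa using Ap.const u 1
  | succ i ih => simpa [pow_succ] using ih.mul hu hf

lemma Ap.x (u : ℕ → ℕ) : Ap u (fun n => (u n : ℝ) / n) 0 := by
  refine Ap.of_bound 1 (Eventually.of_forall fun n => ?_)
  rw [sub_zero, abs_of_nonneg (by positivity)]
  unfold epsq
  have : (0 : ℝ) ≤ 1 / u n := by positivity
  linarith

lemma Ap.iu (u : ℕ → ℕ) : Ap u (fun n => 1 / (u n : ℝ)) 0 := by
  refine Ap.of_bound 1 (Eventually.of_forall fun n => ?_)
  rw [sub_zero, abs_of_nonneg (by positivity)]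
  unfold epsq
  have : (0 : ℝ) ≤ (u n : ℝ) / n := by positivity
  linarith

lemma u_pos {u : ℕ → ℕ} (hu : UGood u) : ∀ᶠ n in atTop, 1 ≤ u n := by
  filter_upwards [hu.1.eventually_ge_atTop 1] with n hn
  exact_mod_cast hn

lemma u_small {u : ℕ → ℕ} (hu : UGood u) (δ : ℝ) (hδ : 0 < δ) :
    ∀ᶠ n in atTop, (u n : ℝ) ≤ δ * n := by
  filter_upwards [hu.2.eventually_le_const hδ, eventually_gt_atTop 0] with n hn h0
  have : (0 : ℝ) < n := by exact_mod_cast h0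
  rwa [div_le_iff₀ this] at hn

lemma Ap.inn {u : ℕ → ℕ} (hu : UGood u) : Ap u (fun n => 1 / (n : ℝ)) 0 := by
  refine Ap.of_bound 1 ?_
  filter_upwards [u_pos hu] with n hn
  rw [sub_zero, abs_of_nonneg (by positivity), one_mul]
  unfold epsq
  have h1 : (0 : ℝ) ≤ 1 / u n := by positivity
  have h2 : (1 : ℝ) / n ≤ (u n : ℝ) / n := by
    gcongr
    exact_mod_cast hn
  linarith

lemma Ap.choose {u : ℕ → ℕ} (hu : UGood u) (v w : ℕ → ℕ) (c : ℝ)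
    (hv : Ap u (fun n => (v n : ℝ) / w n) c) (hw : Ap u (fun n => 1 / (w n : ℝ)) 0) (i : ℕ) :
    Ap u (fun n => ((v n).choose i : ℝ) / (w n : ℝ) ^ i) (c ^ i / i.factorial) := by
  induction i with
  | zero => simpa using Ap.const u 1
  | succ i ih =>
    have h1 : Ap u (fun n => (v n : ℝ) / w n + (-(i : ℝ)) * (1 / (w n : ℝ))) (c + -(i : ℝ) * 0) :=
      hv.add ((Ap.const u (-(i : ℝ))).mul hu hw)
    have h2 := (ih.mul hu h1).mul hu (Ap.const u (1 / ((i : ℝ) + 1)))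
    have h3 : c ^ i / i.factorial * (c + -(i : ℝ) * 0) * (1 / ((i : ℝ) + 1)) =
        c ^ (i + 1) / (i + 1).factorial := by
      rw [Nat.factorial_succ]; push_cast
      have : (i.factorial : ℝ) ≠ 0 := by positivity
      field_simp
      ring
    rw [h3] at h2
    refine h2.congr' (Eventually.of_forall fun n => ?_)
    have h4 : ((v n).choose (i + 1) : ℝ) * ((i : ℝ) + 1) = (v n).choose i * ((v n : ℝ) - i) := by
      rcases le_or_gt i (v n) with h | h
      · have := Nat.choose_succ_right_eq (v n) i
        rw [← Nat.cast_sub h]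
        exact_mod_cast this
      · rw [Nat.choose_eq_zero_of_lt h, Nat.choose_eq_zero_of_lt (by omega)]; simp
    have h5 : ((v n).choose (i + 1) : ℝ) = (v n).choose i * ((v n : ℝ) - i) / ((i : ℝ) + 1) := by
      rw [← h4]; field_simp
    rw [h5, pow_succ]
    ring

lemma binom_id (d q : ℕ) (i : ℕ) (hi : i ≤ q) :
    ((d + q).choose (d + i) : ℝ) * (Dq d i / i.factorial) = (d + q).choose q * q.choose i := by
  have hD : Dq d i * d.factorial = (d + i).factorial := by
    clear hi
    unfold Dq
    induction i with
    | zero => simp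
    | succ i ih =>
      rw [Finset.prod_range_succ, ← add_assoc, Nat.factorial_succ]
      push_cast at ih ⊢
      rw [← ih]; ring
  rw [Nat.cast_choose ℝ (by omega : d + i ≤ d + q), Nat.cast_choose ℝ (by omega : q ≤ d + q),
    Nat.cast_choose ℝ hi, ← hD]
  have e1 : d + q - (d + i) = q - i := by omega
  have e2 : d + q - q = d := by omega
  rw [e1, e2]
  have hD0 : Dq d i ≠ 0 := by
    unfold Dq
    exact Finset.prod_ne_zero_iff.2 fun l _ => by positivity
  have := Nat.factorial_ne_zero
  field_simp

lemma S_lim (d q : ℕ) (X τ : ℝ) :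
    ∑ i ∈ Finset.range (q + 1), ((d + q).choose (d + i) : ℝ) * (X * Dq d i * (τ ^ i / i.factorial)) =
      X * (d + q).choose q * (1 + τ) ^ q := by
  rw [add_comm 1 τ, add_pow, Finset.mul_sum]
  refine Finset.sum_congr rfl fun i hi => ?_
  have := binom_id d q i (by simp at hi; omega)
  simp only [one_pow, mul_one]
  linear_combination (X * τ ^ i) * this

theorem core (d p : ℕ) (hd : 1 ≤ d) (u : ℕ → ℕ) (hu : UGood u)
    (μ : ℝ) (hμ0 : 0 < μ)
    (m : ℕ → ℕ) (hm : ∀ n, m n = ⌈μ * (n : ℝ) ^ (p + 1) / (u n : ℝ) ^ p⌉₊)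
    (τ lam : ℝ) (hτ : 0 < τ) :
    ∃ C > (0 : ℝ), ∀ᶠ n in atTop,
      0 < upperE (d + (p + 1)) (p + 1 + 1) n (u n) (m n) ⌊τ * (u n : ℝ)⌋₊
            (fun st : ℤ × (ℕ → ℕ) => Real.exp (lam * (st.1 : ℝ))) ∧
      |Real.log (upperE (d + (p + 1)) (p + 1 + 1) n (u n) (m n) ⌊τ * (u n : ℝ)⌋₊
            (fun st : ℤ × (ℕ → ℕ) => Real.exp (lam * (st.1 : ℝ))))
          - (μ * ((Real.exp (d * lam) - 1) * ((d + (p + 1)).choose (p + 1) : ℝ)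
      * (1 + τ) ^ (p + 1)) - lam * τ) * u n|
        ≤ C * max 1 ((u n : ℝ) ^ 2 / n) := by
  set q := p + 1 with hq
  set X : ℝ := Real.exp (d * lam) - 1 with hX
  set T : ℕ → ℕ := fun n => ⌊τ * (u n : ℝ)⌋₊ with hT
  set x : ℕ → ℝ := fun n => (u n : ℝ) / n with hx
  have hxAp : Ap u x 0 := Ap.x u
  have hupos := u_pos hu
  have hnpos : ∀ᶠ n : ℕ in atTop, 0 < n := eventually_gt_atTop 0
  have hun : ∀ᶠ n : ℕ in atTop, u n ≤ n := by
    filter_upwards [u_small hu 1 one_pos] with n hn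
    rw [one_mul] at hn
    exact_mod_cast hn
  have hTle : ∀ n, (T n : ℝ) ≤ τ * u n := fun n => Nat.floor_le (by positivity)
  have hTn : ∀ᶠ n : ℕ in atTop, 2 * (u n + T n) ≤ n := by
    filter_upwards [u_small hu (1 / (2 * (1 + τ))) (by positivity)] with n hn
    have h1 := hTle n
    have h2 : 2 * (1 + τ) * (u n : ℝ) ≤ n := by
      calc 2 * (1 + τ) * (u n : ℝ) ≤ 2 * (1 + τ) * (1 / (2 * (1 + τ)) * n) := by gcongr
        _ = n := by field_simp
    have h3 : 2 * ((u n : ℝ) + T n) ≤ n := by nlinarith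
    exact_mod_cast h3
  -- basic ratios
  have hTu : Ap u (fun n => (T n : ℝ) / u n) τ := by
    refine Ap.of_bound 1 ?_
    filter_upwards [hupos] with n hn
    have hu0 : (0 : ℝ) < u n := by exact_mod_cast hn
    have h1 := hTle n
    have h2 : τ * u n < T n + 1 := Nat.lt_floor_add_one _
    have h3 : (T n : ℝ) / u n - τ = (T n - τ * u n) / u n := by field_simp
    rw [h3, abs_div, abs_of_pos hu0, one_mul]
    have h4 : |(T n : ℝ) - τ * u n| ≤ 1 := by rw [abs_le]; constructor <;> linarith
    unfold epsq
    have h5 : (0 : ℝ) ≤ (u n : ℝ) / n := by positivity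
    have h6 : |(T n : ℝ) - τ * u n| / u n ≤ 1 / u n := by gcongr
    linarith
  have huu : Ap u (fun n => (u n : ℝ) / u n) 1 := by
    refine (Ap.const u 1).congr' ?_
    filter_upwards [hupos] with n hn
    have hu0 : (0 : ℝ) < u n := by exact_mod_cast hn
    field_simp
  have hnn : Ap u (fun n => (n : ℝ) / n) 1 := by
    refine (Ap.const u 1).congr' ?_
    filter_upwards [hnpos] with n hn
    have hu0 : (0 : ℝ) < n := by exact_mod_cast hn
    field_simp
  have hnu : Ap u (fun n => ((n - u n : ℕ) : ℝ) / n) 1 := by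
    have := (Ap.const u 1).add ((Ap.const u (-1)).mul hu hxAp)
    rw [mul_zero, add_zero] at this
    refine this.congr' ?_
    filter_upwards [hnpos, hun] with n hn hn2
    have hu0 : (0 : ℝ) < n := by exact_mod_cast hn
    rw [Nat.cast_sub hn2]
    simp only [hx]
    field_simp
    ring
  have hcT := fun i => Ap.choose hu T u τ hTu (Ap.iu u) i
  have hcu := fun i => Ap.choose hu u u 1 huu (Ap.iu u) i
  have hcn := fun i => Ap.choose hu (fun n => n) (fun n => n) 1 hnn (Ap.inn hu) i
  have hcnu := fun i => Ap.choose hu (fun n => n - u n) (fun n => n) 1 hnu (Ap.inn hu) i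
  -- hypergeometric probabilities
  set P : ℕ → ℕ → ℝ := fun j n => ((n - u n).choose j : ℝ) * ((u n).choose (d + q - j) : ℝ) /
    (n.choose (d + q) : ℝ) with hP
  have hPAp : ∀ j ≤ d + q, Ap u (fun n => P j n / x n ^ (d + q - j)) ((d + q).choose j) := by
    intro j hj
    have h1 := ((hcnu j).mul hu (hcu (d + q - j))).mul hu
      ((hcn (d + q)).inv hu (by positivity))
    have h2 : (1 : ℝ) ^ j / (j.factorial : ℝ) * (1 ^ (d + q - j) / ((d + q - j).factorial : ℝ)) *
        (1 ^ (d + q) / ((d + q).factorial : ℝ))⁻¹ = (d + q).choose j := by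
      rw [Nat.cast_choose ℝ hj]
      have := Nat.factorial_ne_zero
      simp only [one_pow]
      field_simp
    rw [h2] at h1
    refine h1.congr' ?_
    filter_upwards [hnpos, hupos, eventually_ge_atTop (d + q)] with n hn hn1 hn2
    have hn0 : (0 : ℝ) < n := by exact_mod_cast hn
    have hu0 : (0 : ℝ) < u n := by exact_mod_cast hn1
    have hc : (0 : ℝ) < n.choose (d + q) := by exact_mod_cast Nat.choose_pos hn2
    simp only [hP, hx]
    have e : (n : ℝ) ^ (d + q) = (n : ℝ) ^ j * (n : ℝ) ^ (d + q - j) := by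
      rw [← pow_add]; congr 1; omega
    rw [e, div_pow]
    field_simp
  -- weights
  set W : ℕ → ℕ → ℝ := fun j n => Wt d lam (Yq d lam n (u n) 0 (T n)) j with hW
  have hWY : ∀ i n, W (d + i) n = Yq d lam n (u n) 0 (T n) i := by
    intro i n
    simp only [hW, Wt]
    rcases Nat.eq_zero_or_pos i with h | h
    · subst h; simp [Yq_zero, mul_comm]
    · rw [if_neg (by omega)]; congr 1; omega
  have hWAp : ∀ i, Ap u (fun n => (W (d + i) n - 1) / x n ^ i) (X * Dq d i * (τ ^ i / i.factorial)) := by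
    intro i
    obtain ⟨K, hK, hb⟩ := zbound d lam τ hτ.le i
    have h1 : Ap u (fun n => (W (d + i) n - 1 - Mq d lam n i (T n)) / x n ^ i) 0 := by
      refine Ap.of_bound K ?_
      filter_upwards [hupos, hTn, hnpos] with n h1 h2 h3
      have h4 := (hb n (u n) (T n) h1 (hTle n) h2 (T n) le_rfl).2
      rw [Nat.sub_self, ← hWY] at h4
      have hn0 : (0 : ℝ) < n := by exact_mod_cast h3
      have hu0 : (0 : ℝ) < u n := by exact_mod_cast h1
      have hx0 : 0 < x n := by simp only [hx]; positivity
      rw [sub_zero, abs_div, abs_of_pos (pow_pos hx0 i), div_le_iff₀ (pow_pos hx0 i)]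
      refine h4.trans ?_
      have h5 : x n ≤ epsq u n := by
        simp only [hx, epsq]
        have : (0 : ℝ) ≤ 1 / u n := by positivity
        linarith
      calc K * x n ^ (i + 1) = K * x n * x n ^ i := by ring
        _ ≤ K * epsq u n * x n ^ i := by gcongr
    have h2 := (Ap.const u (X * Dq d i)).mul hu (hcT i)
    have h3 := h1.add h2
    rw [zero_add] at h3
    refine h3.congr' ?_
    filter_upwards [hupos, hnpos] with n h1 h3
    have hn0 : (0 : ℝ) < n := by exact_mod_cast h3
    have hu0 : (0 : ℝ) < u n := by exact_mod_cast h1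
    simp only [hx, Mq]
    rw [div_pow]
    field_simp
    ring
  set S : ℕ → ℝ := fun n => ∑ j ∈ Finset.range (d + q + 1), P j n * (W j n - 1) with hS
  have hxpos : ∀ᶠ n : ℕ in atTop, 0 < x n := by
    filter_upwards [hupos, hnpos] with n h1 h3
    have hn0 : (0 : ℝ) < n := by exact_mod_cast h3
    have hu0 : (0 : ℝ) < u n := by exact_mod_cast h1
    simp only [hx]; positivity
  have hSAp : Ap u (fun n => S n / x n ^ q) (X * (d + q).choose q * (1 + τ) ^ q) := by
    rw [← S_lim]
    have h1 := Ap.sum (u := u) (Finset.range (q + 1))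
      (fun i n => P (d + i) n / x n ^ (d + q - (d + i)) * ((W (d + i) n - 1) / x n ^ i)) _
      (fun i hi => (hPAp (d + i) (by simp at hi; omega)).mul hu (hWAp i))
    have h2 : Ap u (fun n => ∑ j ∈ Finset.range d, P j n / x n ^ (d + q - j) *
        (x n ^ (d - j) * (Real.exp (lam * j) - 1))) (∑ j ∈ Finset.range d, 0) := by
      refine Ap.sum _ _ _ fun j hj => ?_
      have h3 := (hPAp j (by simp at hj; omega)).mul hu
        ((hxAp.pow hu (d - j)).mul hu (Ap.const u (Real.exp (lam * j) - 1)))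
      rw [zero_pow (by simp at hj; omega), zero_mul, mul_zero] at h3
      exact h3
    have h3 := h2.add h1
    rw [Finset.sum_const_zero, zero_add] at h3
    refine h3.congr' ?_
    filter_upwards [hxpos] with n hx0
    simp only [hS]
    rw [add_assoc d q 1, Finset.sum_range_add (fun j => P j n * (W j n - 1)) d (q + 1), add_div, Finset.sum_div, Finset.sum_div]
    congr 1
    · refine Finset.sum_congr rfl fun j hj => ?_
      simp only [Finset.mem_range] at hj
      have e : x n ^ (d + q - j) = x n ^ q * x n ^ (d - j) := by
        rw [← pow_add]; congr 1; omega
      rw [e]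
      simp only [hW, Wt]
      rw [if_pos hj.le]
      field_simp
    · refine Finset.sum_congr rfl fun i hi => ?_
      simp only [Finset.mem_range] at hi
      have e : x n ^ q = x n ^ (d + q - (d + i)) * x n ^ i := by
        rw [← pow_add]; congr 1; omega
      rw [e]
      field_simp
  -- the number of constraints
  have hmAp : Ap u (fun n => (m n : ℝ) * x n ^ q / u n) μ := by
    refine Ap.of_bound 1 ?_
    filter_upwards [hupos, hnpos, hun] with n h1 h3 h4
    have hn0 : (0 : ℝ) < n := by exact_mod_cast h3
    have hu0 : (0 : ℝ) < u n := by exact_mod_cast h1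
    have hx0 : 0 < x n := by simp only [hx]; positivity
    have hx1 : x n ≤ 1 := by
      simp only [hx]; rw [div_le_one hn0]; exact_mod_cast h4
    set v : ℝ := μ * (n : ℝ) ^ (p + 1) / (u n : ℝ) ^ p with hv
    have hv0 : 0 ≤ v := by positivity
    have hm1 : v ≤ m n := by rw [hm n]; exact Nat.le_ceil _
    have hm2 : (m n : ℝ) < v + 1 := by rw [hm n]; exact Nat.ceil_lt_add_one hv0
    have e : μ = v * x n ^ q / u n := by
      simp only [hv, hx, hq]
      rw [div_pow, pow_succ (u n : ℝ)]
      field_simp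
    have h5 : (m n : ℝ) * x n ^ q / u n - μ = ((m n : ℝ) - v) * x n ^ q / u n := by
      rw [sub_mul, sub_div, ← e]
    have h6 : 0 ≤ (m n : ℝ) - v := by linarith
    have h7 : x n ^ q ≤ 1 := pow_le_one₀ hx0.le hx1
    rw [h5, abs_of_nonneg (by positivity), one_mul]
    unfold epsq
    have h8 : ((m n : ℝ) - v) * x n ^ q / u n ≤ 1 * 1 / u n := by
      gcongr
      linarith
    have : (0 : ℝ) ≤ (u n : ℝ) / n := by positivity
    linarith
  have hS0 : Ap u S 0 := by
    have h := hSAp.mul hu (hxAp.pow hu q)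
    rw [zero_pow (by omega), mul_zero] at h
    refine h.congr' ?_
    filter_upwards [hxpos] with n hx0
    field_simp
  have hSsmall : ∀ᶠ n in atTop, |S n| < 1 / 2 := by
    have := (hS0.tendsto hu).abs
    rw [abs_zero] at this
    exact this.eventually_lt_const (by norm_num)
  have hLAp : Ap u (fun n => Real.log (1 + S n) / x n ^ q) (X * (d + q).choose q * (1 + τ) ^ q) := by
    have h1 : Ap u (fun n => 2 * ((S n / x n ^ q) * (S n / x n ^ q) * x n ^ q)) (2 * (_ * _ * 0 ^ q)) :=
      (Ap.const u 2).mul hu ((hSAp.mul hu hSAp).mul hu (hxAp.pow hu q))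
    rw [zero_pow (by omega), mul_zero, mul_zero] at h1
    have h2 : Ap u (fun n => (Real.log (1 + S n) - S n) / x n ^ q) 0 := by
      unfold Ap at h1 ⊢
      refine IsBigO.trans (IsBigO.of_bound 1 ?_) h1
      filter_upwards [hxpos, hSsmall] with n hx0 hs
      rw [abs_lt] at hs
      have hp : 0 < 1 + S n := by linarith
      have g1 := Real.log_le_sub_one_of_pos hp
      have g2 := Real.one_sub_inv_le_log_of_pos hp
      have g3 : S n - (1 - (1 + S n)⁻¹) = S n ^ 2 / (1 + S n) := by field_simp; ring
      have g4 : S n ^ 2 / (1 + S n) ≤ 2 * S n ^ 2 := by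
        rw [div_le_iff₀ hp]
        nlinarith [sq_nonneg (S n)]
      have e : 2 * ((S n / x n ^ q) * (S n / x n ^ q) * x n ^ q) = 2 * S n ^ 2 / x n ^ q := by
        field_simp
      rw [e]
      simp only [sub_zero, Real.norm_eq_abs, one_mul, abs_div]
      refine div_le_div_of_nonneg_right ?_ (abs_nonneg _)
      rw [abs_of_nonneg (by positivity : 0 ≤ 2 * S n ^ 2), abs_le]
      constructor <;> linarith [sq_nonneg (S n)]
    have h3 := h2.add hSAp
    rw [zero_add] at h3
    refine h3.congr' (Eventually.of_forall fun n => ?_)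
    ring
  set E : ℕ → ℝ := fun n => upperE (d + q) (q + 1) n (u n) (m n) (T n)
            (fun st : ℤ × (ℕ → ℕ) => Real.exp (lam * (st.1 : ℝ))) with hE
  have hEeq : ∀ᶠ n in atTop, E n = Real.exp (-lam) ^ (T n) * (1 + S n) ^ (m n) := by
    filter_upwards [hun, eventually_ge_atTop (d + q)] with n h1 h2
    exact upperE_eq d p n (m n) (u n) (T n) hd lam h1 h2
  have hfin : Ap u (fun n => Real.log (E n) / u n)
      (μ * (X * (d + q).choose q * (1 + τ) ^ q) + (-lam) * τ) := by
    have h1 := (hmAp.mul hu hLAp).add ((Ap.const u (-lam)).mul hu hTu)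
    refine h1.congr' ?_
    filter_upwards [hEeq, hSsmall, hxpos] with n h1 hs hx0
    rw [abs_lt] at hs
    have hp : 0 < 1 + S n := by linarith
    rw [h1, Real.log_mul (by positivity) (by positivity), Real.log_pow, Real.log_pow, Real.log_exp]
    field_simp
    ring
  obtain ⟨C, hC, hb⟩ := IsBigO.exists_pos hfin
  refine ⟨2 * C, by positivity, ?_⟩
  filter_upwards [hb.bound, hEeq, hSsmall, hupos, hnpos] with n h1 h2 hs hun hnn
  rw [abs_lt] at hs
  have hp : 0 < 1 + S n := by linarith
  have hu0 : (0 : ℝ) < u n := by exact_mod_cast hun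
  have hn0 : (0 : ℝ) < n := by exact_mod_cast hnn
  change 0 < E n ∧ |Real.log (E n) - _| ≤ _
  refine ⟨by rw [h2]; positivity, ?_⟩
  have e0 : 0 ≤ epsq u n := by unfold epsq; positivity
  rw [Real.norm_eq_abs, Real.norm_eq_abs, abs_of_nonneg e0] at h1
  have h3 : Real.log (E n) - (μ * (X * (d + q).choose q * (1 + τ) ^ q) - lam * τ) * u n
      = (Real.log (E n) / u n - (μ * (X * (d + q).choose q * (1 + τ) ^ q) + (-lam) * τ)) * u n := by
    field_simp
    ring
  rw [h3, abs_mul, abs_of_pos hu0]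
  calc _ ≤ C * epsq u n * u n := by gcongr
    _ = C * (1 + (u n : ℝ) ^ 2 / n) := by unfold epsq; field_simp
    _ ≤ C * (max 1 ((u n : ℝ) ^ 2 / n) + max 1 ((u n : ℝ) ^ 2 / n)) := by
        gcongr
        · exact le_max_left _ _
        · exact le_max_right _ _
    _ = 2 * C * max 1 ((u n : ℝ) ^ 2 / n) := by ring

/-- Theorem `thm:UG`: for the upper-bound Markov chain with
`m = ⌈μ n^{r-1}/u(n)^{r-2}⌉`, for any constants `τ > 0` and `λ`,
`E[exp(λ Ē(⌊τ u(n)⌋))] = exp(φ_{k,r}(μ,λ,τ) u(n) + O(max{1, u(n)²/n}))`. -/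
theorem stmt13 (k r : ℕ) (hr : 3 ≤ r) (hrk : r ≤ k)
    (u : ℕ → ℕ) (hu : UGood u)
    (μ : ℝ) (hμ0 : 0 < μ)
    (m : ℕ → ℕ) (hm : ∀ n, m n = ⌈μ * (n : ℝ) ^ (r - 1) / (u n : ℝ) ^ (r - 2)⌉₊)
    (τ lam : ℝ) (hτ : 0 < τ) :
    ∃ C > (0 : ℝ), ∀ᶠ n in atTop,
      0 < upperE k r n (u n) (m n) ⌊τ * (u n : ℝ)⌋₊
            (fun st : ℤ × (ℕ → ℕ) => Real.exp (lam * (st.1 : ℝ))) ∧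
      |Real.log (upperE k r n (u n) (m n) ⌊τ * (u n : ℝ)⌋₊
            (fun st : ℤ × (ℕ → ℕ) => Real.exp (lam * (st.1 : ℝ))))
          - phiE k r μ lam τ * u n|
        ≤ C * max 1 ((u n : ℝ) ^ 2 / n) := by
  obtain ⟨p, rfl⟩ : ∃ p, r = p + 1 + 1 := ⟨r - 2, by omega⟩
  obtain ⟨d, hd, rfl⟩ : ∃ d, 1 ≤ d ∧ k = d + (p + 1) := ⟨k - (p + 1), by omega, by omega⟩
  obtain ⟨C, hC, h⟩ := core d p hd u hu μ hμ0 m hm τ lam hτ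
  refine ⟨C, hC, ?_⟩
  have e : phiE (d + (p + 1)) (p + 1 + 1) μ lam τ =
      μ * ((Real.exp (d * lam) - 1) * ((d + (p + 1)).choose (p + 1) : ℝ)
      * (1 + τ) ^ (p + 1)) - lam * τ := by
    unfold phiE
    have e1 : p + 1 + 1 - 1 = p + 1 := rfl
    rw [e1]
    push_cast
    have e2 : (d : ℝ) + (p + 1) - (p + 1 + 1) + 1 = d := by ring
    rw [e2]
    ring
  rw [e]
  exact h
end
end

section
/- Fix integers k ≥ r ≥ 3, u ∈ ω(1) ∩ o(n), a constant μ > 0, and set m = ⌈μ·n^{r−1}/u(n)^{r−2}⌉. Consider the Markov chain for the lower bound (E̲(t), C̲_{k−r+2}(t),…,C̲_k(t)) driven by the random ensemble. Then for any constants τ > 0 and λ ∈ ℝ, log E[exp(λ·E̲(⌊τ·u(n)⌋))] = φ_{k,r}(μ,λ,τ)·u(n) + O(max{1, u(n)²/n}) as n → ∞, i.e., E[exp(λ·E̲(⌊τ·u(n)⌋))] = exp( φ_{k,r}(μ,λ,τ)·u(n) + O(max{1, u(n)²/n}) ). -/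
open Filter Finset Asymptotics

noncomputable section

/-- parameter `x` of the exact exponential-linear solution. -/
def xv (k r n u : ℕ) (lam : ℝ) : ℕ → ℕ → ℝ
  | _, 0 => Real.exp lam
  | s, t + 1 => (1 - 1 / ((n : ℝ) - (u : ℝ) - (s : ℝ) - (k : ℝ) + (r : ℝ))) * xv k r n u lam (s + 1) t
      + 1 / ((n : ℝ) - (u : ℝ) - (s : ℝ) - (k : ℝ) + (r : ℝ))

/-- weights `w_j`. -/
def wv (k r n u : ℕ) (lam : ℝ) : ℕ → ℕ → ℕ → ℝ
  | s, 0, j => if j ≤ k - r + 1 then xv k r n u lam s 0 ^ j else 1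
  | s, t + 1, j => if j ≤ k - r + 1 then xv k r n u lam s (t + 1) ^ j else
      (1 - (j : ℝ) / ((n : ℝ) - (u : ℝ) - (s : ℝ))) * wv k r n u lam (s + 1) t j
      + (j : ℝ) / ((n : ℝ) - (u : ℝ) - (s : ℝ)) * wv k r n u lam (s + 1) t (j - 1)

lemma wv_small (k r n u : ℕ) (lam : ℝ) (s t j : ℕ) (hj : j ≤ k - r + 1) :
    wv k r n u lam s t j = xv k r n u lam s t ^ j := by
  cases t <;> simp [wv, hj]

lemma binom_sum (N : ℕ) (p a b : ℝ) :
    ∑ i ∈ Finset.range (N + 1), binomPMF N p i * (a ^ (N - i) * b ^ i)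
      = ((1 - p) * a + p * b) ^ N := by
  rw [add_comm ((1 - p) * a), add_pow]
  refine Finset.sum_congr rfl fun i _ => ?_
  unfold binomPMF
  rw [mul_pow, mul_pow]; ring

lemma binomPMF_zero (N : ℕ) (p : ℝ) (i : ℕ) (h : N < i) : binomPMF N p i = 0 := by
  simp [binomPMF, Nat.choose_eq_zero_of_lt h]

lemma Rext_val_s14 (k r : ℕ) (R : Fin (r - 1) → ℕ) (i : Fin (r - 1)) :
    Rext k r R (k - r + 2 + i) = R i := by
  unfold Rext
  rw [dif_pos ⟨by omega, by have := i.2; omega⟩]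
  congr 1
  ext; simp

lemma Rext_out (k r : ℕ) (hr : 3 ≤ r) (R : Fin (r - 1) → ℕ) :
    Rext k r R (k - r + 2 + (r - 1)) = 0 := by
  unfold Rext
  rw [dif_neg]
  omega

/-- the key product rearrangement -/
lemma prod_shift (x : ℝ) (K q F S : ℕ) (w : ℕ → ℝ) (C R : ℕ → ℕ) (hw : w K = x ^ K) (hR : R (K + 1 + q) = 0) (hq : 0 < q)
    (F' : ℕ) (hF : F' = F - S + K * R (K + 1)) :
    x ^ F' * ∏ i ∈ Finset.range q, w (K + 1 + i) ^ (C (K+1+i) - R (K+1+i) + R (K+1+i+1)) =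
     x ^ (F - S) * ∏ i ∈ Finset.range q, (w (K+1+i) ^ (C (K+1+i) - R (K+1+i)) * w (K+1+i-1) ^ (R (K+1+i))) := by
  obtain ⟨q, rfl⟩ : ∃ q', q = q' + 1 := ⟨q - 1, by omega⟩
  subst hF
  have h1 : ∏ i ∈ Finset.range (q+1), w (K + 1 + i) ^ (C (K+1+i) - R (K+1+i) + R (K+1+i+1))
    = (∏ i ∈ Finset.range (q+1), w (K + 1 + i) ^ (C (K+1+i) - R (K+1+i))) *
      ∏ i ∈ Finset.range (q+1), w (K + 1 + i) ^ (R (K+1+i+1)) := by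
    rw [← Finset.prod_mul_distrib]
    exact Finset.prod_congr rfl fun i _ => pow_add _ _ _
  have h2 : ∏ i ∈ Finset.range (q+1), w (K + 1 + i - 1) ^ (R (K+1+i))
     = w K ^ R (K+1) * ∏ i ∈ Finset.range (q+1), w (K + 1 + i) ^ (R (K+1+i+1)) := by
    rw [Finset.prod_range_succ' , Finset.prod_range_succ (fun i => w (K + 1 + i) ^ (R (K+1+i+1)))]
    have e : R (K + 1 + q + 1) = 0 := hR
    rw [e]
    simp only [pow_zero, mul_one, add_zero, Nat.add_sub_cancel]
    rw [mul_comm]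
    congr 1
  rw [h1, Finset.prod_mul_distrib, h2, hw, pow_add, pow_mul]
  ring

theorem lowerIter_formula (k r n u : ℕ) (hr : 3 ≤ r) (hrk : r ≤ k) (lam : ℝ) (t : ℕ) :
    ∀ (s : ℕ) (st : ℤ × (ℕ → ℕ)), 0 ≤ st.1 + s →
    lowerIter k r n u s t (fun st : ℤ × (ℕ → ℕ) => Real.exp (lam * (st.1 : ℝ))) st =
      Real.exp (-lam * ((s : ℝ) + t)) * (xv k r n u lam s t ^ (st.1 + s).toNat *
        ∏ i ∈ Finset.range (r - 1), wv k r n u lam s t (k - r + 2 + i) ^ st.2 (k - r + 2 + i)) := by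
  induction t with
  | zero =>
    rintro s ⟨E, C⟩ h
    simp only [lowerIter, xv, wv] at *
    rw [Finset.prod_eq_one, mul_one, ← Real.exp_nat_mul, ← Real.exp_add]
    · congr 1
      have : (((E + s).toNat : ℤ) : ℝ) = (E : ℝ) + s := by rw [Int.toNat_of_nonneg h]; push_cast; ring
      rw [← Int.cast_natCast (R := ℝ) (E + s).toNat, this]
      push_cast; ring
    · intro i _
      rw [if_neg (by omega), one_pow]
  | succ t ih =>
    rintro s ⟨E, C⟩ h
    simp only [lowerIter] at *
    unfold lowerStep
    dsimp only
    obtain ⟨F, hF⟩ := Int.eq_ofNat_of_zero_le h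
    have hF' : (E + (s:ℤ)).toNat = F := by omega
    rw [hF']
    set X := xv k r n u lam (s + 1) t with hX
    set W := wv k r n u lam (s + 1) t with hW
    set pS := 1 / ((n : ℝ) - (u : ℝ) - (s : ℝ) - (k : ℝ) + (r : ℝ)) with hpS
    set c := Real.exp (-lam * (((s + 1 : ℕ) : ℝ) + t)) with hc
    let fS : Finset ((Fin (r - 1) → ℕ) × ℕ) :=
      (Fintype.piFinset fun i : Fin (r-1) => Finset.range (C (k - r + 2 + i) + 1)) ×ˢ Finset.range (F + 1)
    rw [tsum_eq_sum (s := fS)]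
    · have key : ∀ RS ∈ fS, 
        ((∏ i : Fin (r - 1),
          binomPMF (C (k - r + 2 + (i : ℕ)))
          (((k - r + 2 + (i : ℕ) : ℕ) : ℝ) / ((n : ℝ) - (u : ℝ) - (s : ℝ))) (RS.1 i)) *
          binomPMF F pS RS.2) *
          lowerIter k r n u (s+1) t (fun st : ℤ × (ℕ → ℕ) => Real.exp (lam * (st.1 : ℝ))) (E - 1 - (RS.2 : ℤ) + ((k - r + 1 : ℕ) : ℤ) * (Rext k r RS.1 (k - r + 2) : ℤ),
       fun j => if k - r + 2 ≤ j ∧ j ≤ k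
         then C j - Rext k r RS.1 j + Rext k r RS.1 (j + 1) else C j) 
         = c * ((∏ i : Fin (r - 1),
          (binomPMF (C (k - r + 2 + (i : ℕ)))
          (((k - r + 2 + (i : ℕ) : ℕ) : ℝ) / ((n : ℝ) - (u : ℝ) - (s : ℝ))) (RS.1 i) * 
           (W (k - r + 2 + i) ^ (C (k - r + 2 + i) - RS.1 i) * W (k - r + 2 + i - 1) ^ (RS.1 i)))) *
          (binomPMF F pS RS.2 * (X ^ (F - RS.2) * 1 ^ RS.2))) := by
        rintro ⟨R, S⟩ hRS
        simp only [fS, Finset.mem_product, Fintype.mem_piFinset, Finset.mem_range] at hRS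
        dsimp only
        have hE : E - 1 - (S : ℤ) + ((k - r + 1 : ℕ) : ℤ) * (Rext k r R (k - r + 2) : ℤ) + ((s + 1 : ℕ) : ℤ)
            = ((F - S + (k - r + 1) * Rext k r R (k - r + 2) : ℕ) : ℤ) := by
          have hS : S ≤ F := by have := hRS.2; omega
          generalize Rext k r R (k - r + 2) = Q
          generalize k - r = d
          push_cast [hS]
          linarith
        rw [ih (s+1) _ (by dsimp only; rw [hE]; positivity)]
        dsimp only
        rw [hE, Int.toNat_natCast]
        have := prod_shift X (k - r + 1) (r - 1) F S W C (Rext k r R) (wv_small _ _ _ _ _ _ _ _ le_rfl)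
          (Rext_out k r hr R) (by omega) _ rfl
        have e2 : ∏ i ∈ Finset.range (r - 1), W (k - r + 2 + i) ^ (if k - r + 2 ≤ k - r + 2 + i ∧ k - r + 2 + i ≤ k then C (k - r + 2 + i) - Rext k r R (k - r + 2 + i) + Rext k r R (k - r + 2 + i + 1) else C (k - r + 2 + i)) = 
          ∏ i ∈ Finset.range (r - 1), W (k - r + 1 + 1 + i) ^ (C (k - r + 1 + 1 + i) - Rext k r R (k - r + 1 + 1 + i) + Rext k r R (k - r + 1 + 1 + i + 1)) := by
          refine Finset.prod_congr rfl fun i hi => ?_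
          rw [Finset.mem_range] at hi
          rw [if_pos ⟨by omega, by omega⟩]
        rw [e2, this, Finset.prod_mul_distrib (f := fun i : Fin (r-1) => binomPMF (C (k - r + 2 + (i : ℕ)))
          (((k - r + 2 + (i : ℕ) : ℕ) : ℝ) / ((n : ℝ) - (u : ℝ) - (s : ℝ))) (R i))]
        rw [Finset.prod_range (n := r - 1)]
        have e3 : ∏ i : Fin (r - 1), (W (k - r + 1 + 1 + i) ^ (C (k - r + 1 + 1 + i) - Rext k r R (k - r + 1 + 1 + i)) * W (k - r + 1 + 1 + i - 1) ^ (Rext k r R (k - r + 1 + 1 + i)))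
          = ∏ i : Fin (r - 1), (W (k - r + 2 + i) ^ (C (k - r + 2 + i) - R i) * W (k - r + 2 + i - 1) ^ (R i)) := by
          refine Finset.prod_congr rfl fun i _ => ?_
          have := Rext_val_s14 k r R i
          rw [show k - r + 1 + 1 + (i:ℕ) = k - r + 2 + i by omega, this]
        rw [e3]
        ring
      rw [Finset.sum_congr rfl key, ← Finset.mul_sum]
      simp only [fS]
      rw [Finset.sum_product]
      simp_rw [← Finset.mul_sum]
      rw [← Finset.sum_mul, binom_sum, ← Finset.prod_univ_sum (fun i : Fin (r-1) => Finset.range (C (k - r + 2 + i) + 1)) (fun i x => binomPMF (C (k - r + 2 + (i : ℕ)))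
          (((k - r + 2 + (i : ℕ) : ℕ) : ℝ) / ((n : ℝ) - (u : ℝ) - (s : ℝ))) x * 
           (W (k - r + 2 + i) ^ (C (k - r + 2 + i) - x) * W (k - r + 2 + i - 1) ^ x))]
      simp_rw [binom_sum]
      rw [Finset.prod_range (n := r - 1)]
      have ec : Real.exp (-lam * ((s:ℝ) + ((t + 1 : ℕ) : ℝ))) = c := by
        rw [hc]; congr 1; push_cast; ring
      rw [ec, mul_comm (∏ i : Fin (r-1), _)]
      have e5 : xv k r n u lam s (t + 1) = (1 - pS) * X + pS * 1 := by
        rw [mul_one]; rfl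
      rw [e5]
      congr 2
      refine Finset.prod_congr rfl fun i _ => ?_
      simp only [wv]
      rw [if_neg (by omega)]
    · rintro ⟨R, S⟩ h
      simp only [fS, Finset.mem_product, Fintype.mem_piFinset, Finset.mem_range, not_and_or, not_forall] at h
      rcases h with ⟨i, hi⟩ | h
      · rw [Finset.prod_eq_zero (Finset.mem_univ i)]
        · simp
        · exact binomPMF_zero _ _ _ (by dsimp only; omega)
      · dsimp only
        rw [binomPMF_zero F _ S (by omega)]
        simp

/-- number of unknown variables of an embedding -/
def cntE {n k : ℕ} (u : ℕ) (e : Fin k ↪ Fin n) : ℕ :=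
  ((Finset.univ.image e).filter fun i : Fin n => u ≤ (i : ℕ)).card

lemma cntE_le {n k : ℕ} (u : ℕ) (e : Fin k ↪ Fin n) : cntE u e ≤ k := by
  unfold cntE
  refine (Finset.card_filter_le _ _).trans (Finset.card_image_le.trans ?_)
  simp

lemma prod_w {n m k : ℕ} (u : ℕ) (ω : Fin m → (Fin k ↪ Fin n)) (w : ℕ → ℝ) :
    ∏ a, w (cntE u (ω a)) = ∏ j ∈ Finset.range (k + 1), w j ^ Cinit n m k u ω j := by
  rw [← Finset.prod_fiberwise_of_maps_to (s := Finset.univ) (t := Finset.range (k+1)) (g := fun a => cntE u (ω a))]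
  · refine Finset.prod_congr rfl fun j _ => ?_
    rw [Finset.prod_congr rfl (g := fun _ => w j)]
    · rw [Finset.prod_const]; rfl
    · intro a ha
      rw [(Finset.mem_filter.1 ha).2]
  · intro a _
    have := cntE_le u (ω a)
    simp; omega

lemma range_split (k r : ℕ) (hr : 3 ≤ r) (hrk : r ≤ k) (f : ℕ → ℝ) :
    ∏ j ∈ Finset.range (k + 1), f j = f 0 * (∏ j ∈ Finset.Icc 1 (k - r + 1), f j) *
      ∏ i ∈ Finset.range (r - 1), f (k - r + 2 + i) := by
  rw [show k + 1 = (k - r + 2) + (r - 1) by omega, Finset.prod_range_add]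
  congr 1
  rw [show k - r + 2 = (k - r + 1) + 1 by omega, Finset.prod_range_succ', mul_comm]
  congr 1
  rw [Finset.range_eq_Ico, Finset.prod_Ico_add' f 0 (k-r+1) 1]
  rfl

theorem lowerE_formula1 (k r n u m : ℕ) (hr : 3 ≤ r) (hrk : r ≤ k) (lam : ℝ) (T : ℕ) :
    lowerE k r n u m T (fun st : ℤ × (ℕ → ℕ) => Real.exp (lam * (st.1 : ℝ))) =
      Real.exp (-lam * T) * ((∑ e : Fin k ↪ Fin n, wv k r n u lam 0 T (cntE u e)) /
        (Fintype.card (Fin k ↪ Fin n) : ℝ)) ^ m := by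
  unfold lowerE
  have h : ∀ ω : Fin m → (Fin k ↪ Fin n), lowerIter k r n u 0 T (fun st : ℤ × (ℕ → ℕ) => Real.exp (lam * (st.1 : ℝ))) (initState n m k r u ω)
     = Real.exp (-lam * T) * ∏ a, wv k r n u lam 0 T (cntE u (ω a)) := by
    intro ω
    have hE : (initState n m k r u ω).1 + ((0:ℕ):ℤ) = ((∑ j ∈ Finset.Icc 1 (k - r + 1), j * Cinit n m k u ω j : ℕ) : ℤ) := by
      simp [initState]
    rw [lowerIter_formula k r n u hr hrk lam T 0 _ (by rw [hE]; positivity), prod_w, range_split k r hr hrk, hE, Int.toNat_natCast,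
      wv_small _ _ _ _ _ _ _ 0 (by omega), pow_zero, one_pow, one_mul, ← Finset.prod_pow_eq_pow_sum]
    simp only [Nat.cast_zero, zero_add]
    congr 2
    refine Finset.prod_congr rfl fun j hj => ?_
    rw [wv_small _ _ _ _ _ _ _ j (Finset.mem_Icc.1 hj).2, pow_mul]
  rw [Finset.sum_congr rfl fun ω _ => h ω, ← Finset.mul_sum]
  have h2 := Finset.prod_univ_sum (fun _ : Fin m => (Finset.univ : Finset (Fin k ↪ Fin n))) (fun _ e => wv k r n u lam 0 T (cntE u e))
  rw [Fintype.piFinset_univ] at h2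
  rw [← h2, Finset.prod_const, Finset.card_univ, Fintype.card_fin, Fintype.card_fun, Fintype.card_fin, div_pow, mul_div_assoc]
  push_cast
  rfl

lemma card_emb_fiber (n k : ℕ) (S : Finset (Fin n)) (hS : S.card = k) :
    (Finset.univ.filter fun e : Fin k ↪ Fin n => Finset.univ.image e = S).card = k.factorial := by
  have e0 : Fin k ≃ S := (Fintype.equivFinOfCardEq (by simpa using hS)).symm
  rw [← Fintype.card_subtype]
  have : Fintype.card (Fin k ≃ S) = k.factorial := by
    rw [Fintype.card_equiv e0, Fintype.card_fin]
  rw [← this]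
  refine Fintype.card_congr ?_
  refine Equiv.ofBijective (fun e => Equiv.ofBijective (fun i => (⟨e.1 i, by
      have := Finset.mem_image_of_mem e.1 (Finset.mem_univ i)
      exact (Finset.ext_iff.1 e.2 _).1 this⟩ : S)) ?_) ?_
  · rw [Fintype.bijective_iff_injective_and_card]
    refine ⟨fun i j h => e.1.injective (by simpa using h), by simpa using hS.symm⟩
  · constructor
    · intro e e' h
      apply Subtype.ext
      ext i
      have := congrArg (fun g : Fin k ≃ S => ((g i : Fin n) : ℕ)) h
      simpa using this
    · intro g
      refine ⟨⟨g.toEmbedding.trans (Function.Embedding.subtype _), ?_⟩, ?_⟩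
      · ext x
        simp only [Finset.mem_image, Finset.mem_univ, true_and]
        constructor
        · rintro ⟨i, rfl⟩; simp
        · intro hx; exact ⟨g.symm ⟨x, hx⟩, by simp⟩
      · ext i; simp

lemma card_sub (n k j : ℕ) (U : Finset (Fin n)) (hj : j ≤ k) :
    (Finset.univ.filter fun S : Finset (Fin n) => S.card = k ∧ (S ∩ U).card = j).card
      = Uᶜ.card.choose (k - j) * U.card.choose j := by
  rw [← Finset.card_powersetCard, ← Finset.card_powersetCard, ← Finset.card_product]
  refine Finset.card_bij' (fun S _ => (S \ U, S ∩ U)) (fun p _ => p.1 ∪ p.2) ?_ ?_ ?_ ?_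
  · intro S hS
    simp only [Finset.mem_filter, Finset.mem_univ, true_and] at hS
    simp only [Finset.mem_product, Finset.mem_powersetCard]
    have := Finset.card_sdiff_add_card_inter S U
    refine ⟨⟨fun x hx => by simp at hx ⊢; exact hx.2, by omega⟩, Finset.inter_subset_right, hS.2⟩
  · rintro ⟨A, B⟩ h
    simp only [Finset.mem_product, Finset.mem_powersetCard] at h
    obtain ⟨⟨hA, hA'⟩, hB, hB'⟩ := h
    have hd : Disjoint A U := by
      rw [Finset.disjoint_left]; intro x hx; simpa using hA hx
    simp only [Finset.mem_filter, Finset.mem_univ, true_and]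
    refine ⟨by rw [Finset.card_union_of_disjoint (hd.mono_right hB)]; omega, ?_⟩
    rw [Finset.union_inter_distrib_right, Finset.disjoint_iff_inter_eq_empty.1 hd, Finset.empty_union, Finset.inter_eq_left.2 hB, hB']
  · intro S _
    exact Finset.sdiff_union_inter S U
  · rintro ⟨A, B⟩ h
    simp only [Finset.mem_product, Finset.mem_powersetCard] at h
    obtain ⟨⟨hA, hA'⟩, hB, hB'⟩ := h
    have hd : ∀ x ∈ A, x ∉ U := by
      intro x hx; simpa using hA hx
    ext x
    · simp only [Finset.mem_sdiff, Finset.mem_union]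
      have := hd x; have := @hB x; tauto
    · simp only [Finset.mem_inter, Finset.mem_union]
      have := hd x; have := @hB x; tauto

lemma card_cnt (n k u j : ℕ) (hu : u ≤ n) (hj : j ≤ k) :
    (Finset.univ.filter fun e : Fin k ↪ Fin n => cntE u e = j).card
      = k.factorial * (u.choose (k - j) * (n - u).choose j) := by
  set U : Finset (Fin n) := Finset.univ.filter fun i : Fin n => u ≤ (i : ℕ) with hU
  have hUc : Uᶜ.card = u := by
    have : Uᶜ = Finset.univ.filter fun i : Fin n => (i : ℕ) < u := by
      ext i; simp [hU]
    rw [this, Fin.card_filter_val_lt, min_eq_right hu]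
  have hUcard : U.card = n - u := by
    have := Finset.card_add_card_compl U
    rw [hUc, Fintype.card_fin] at this; omega
  have hs := card_sub n k j U hj
  rw [hUc, hUcard] at hs
  rw [← hs, mul_comm]
  rw [Finset.card_eq_sum_card_fiberwise (f := fun e : Fin k ↪ Fin n => Finset.univ.image e)
    (t := Finset.univ.filter fun S : Finset (Fin n) => S.card = k ∧ (S ∩ U).card = j)]
  · rw [Finset.sum_eq_card_nsmul (b := k.factorial), smul_eq_mul]
    intro S hS
    simp only [Finset.mem_filter, Finset.mem_univ, true_and] at hS
    rw [← card_emb_fiber n k S hS.1]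
    congr 1
    ext e
    simp only [Finset.mem_filter, Finset.mem_univ, true_and, and_iff_right_iff_imp]
    intro he
    rw [cntE, he, ← hS.2, hU]
    congr 1
    ext i; simp
  · intro e he
    simp only [Finset.coe_filter, Finset.mem_univ, true_and, Set.mem_ofPred_eq] at he ⊢
    refine ⟨by rw [Finset.card_image_of_injective _ e.injective]; simp, ?_⟩
    rw [← he, cntE, hU]
    congr 1
    ext i; simp

/-- hypergeometric weight -/
def hyp (n k v j : ℕ) : ℝ := (v.choose (k - j) : ℝ) * ((n - v).choose j : ℝ) / (n.choose k : ℝ)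

theorem lowerE_formula (k r n u m : ℕ) (hr : 3 ≤ r) (hrk : r ≤ k) (hu : u ≤ n) (lam : ℝ) (T : ℕ) :
    lowerE k r n u m T (fun st : ℤ × (ℕ → ℕ) => Real.exp (lam * (st.1 : ℝ))) =
      Real.exp (-lam * T) * (∑ j ∈ Finset.range (k + 1), hyp n k u j * wv k r n u lam 0 T j) ^ m := by
  rw [lowerE_formula1 k r n u m hr hrk]
  congr 2
  rw [← Finset.sum_fiberwise_of_maps_to (s := Finset.univ) (t := Finset.range (k+1)) (g := fun e : Fin k ↪ Fin n => cntE u e), Finset.sum_div]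
  · refine Finset.sum_congr rfl fun j hj => ?_
    rw [Finset.sum_eq_card_nsmul (b := wv k r n u lam 0 T j), card_cnt n k u j hu (by rw [Finset.mem_range] at hj; omega),
      Fintype.card_embedding_eq, Fintype.card_fin, Fintype.card_fin, Nat.descFactorial_eq_factorial_mul_choose, hyp, nsmul_eq_mul]
    · have : (k.factorial : ℝ) ≠ 0 := by positivity
      push_cast
      rw [mul_assoc (k.factorial : ℝ), mul_div_mul_left _ _ this]
      ring
    · intro e he
      rw [(Finset.mem_filter.1 he).2]
  · intro e _
    have := cntE_le u e
    simp; omega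

lemma hyp_nonneg (n k v j : ℕ) : 0 ≤ hyp n k v j := by unfold hyp; positivity

lemma hyp_sum (n k v : ℕ) (hv : v ≤ n) (hk : k ≤ n) : ∑ j ∈ Finset.range (k + 1), hyp n k v j = 1 := by
  unfold hyp
  rw [← Finset.sum_div]
  have h0 : (n.choose k : ℝ) ≠ 0 := by
    have := Nat.choose_pos hk; positivity
  rw [div_eq_one_iff_eq h0]
  have := Nat.add_choose_eq (n - v) v k
  rw [Nat.sub_add_cancel hv, Finset.Nat.sum_antidiagonal_eq_sum_range_succ_mk] at this
  rw [this]
  push_cast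
  exact Finset.sum_congr rfl fun j _ => mul_comm _ _

/-- absorption probabilities -/
def qv (k r n u : ℕ) : ℕ → ℕ → ℕ → ℝ
  | _, 0, j => if j ≤ k - r + 1 then 1 else 0
  | s, t + 1, j => if j ≤ k - r + 1 then 1 else
      (1 - (j : ℝ) / ((n : ℝ) - (u : ℝ) - (s : ℝ))) * qv k r n u (s + 1) t j
      + (j : ℝ) / ((n : ℝ) - (u : ℝ) - (s : ℝ)) * qv k r n u (s + 1) t (j - 1)

lemma qv_small (k r n u s t j : ℕ) (hj : j ≤ k - r + 1) : qv k r n u s t j = 1 := by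
  cases t <;> simp [qv, hj]

lemma qv_succ (k r n u s t j : ℕ) : qv k r n u s (t+1) j =
      (1 - (j : ℝ) / ((n : ℝ) - (u : ℝ) - (s : ℝ))) * qv k r n u (s + 1) t j
      + (j : ℝ) / ((n : ℝ) - (u : ℝ) - (s : ℝ)) * qv k r n u (s + 1) t (j - 1) := by
  by_cases hj : j ≤ k - r + 1
  · rw [qv_small _ _ _ _ _ _ _ hj, qv_small _ _ _ _ _ _ _ hj, qv_small _ _ _ _ _ _ _ (by omega)]; ring
  · rw [qv, if_neg hj]

/-- one step of hypergeometric evolution -/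
lemma hyp_step (n k v : ℕ) (hv : v < n) (q : ℕ → ℝ) :
    ∑ j ∈ Finset.range (k + 1), hyp n k v j * ((1 - (j : ℝ) / ((n : ℝ) - v)) * q j + (j : ℝ) / ((n : ℝ) - v) * q (j - 1))
     = ∑ j ∈ Finset.range (k + 1), hyp n k (v + 1) j * q j := by
  obtain ⟨N, rfl⟩ : ∃ N, n = v + 1 + N := ⟨n - v - 1, by omega⟩
  have hN : ((v + 1 + N : ℕ) : ℝ) - v = (N : ℝ) + 1 := by push_cast; ring
  rw [hN]
  have hN0 : (N : ℝ) + 1 ≠ 0 := by positivity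
  set B : ℝ := ((v + 1 + N).choose k : ℝ) with hB
  have e1 : ∀ j, hyp (v + 1 + N) k v j * (1 - (j:ℝ) / ((N:ℝ) + 1)) = (v.choose (k - j) : ℝ) * (N.choose j : ℝ) / B := by
    intro j
    unfold hyp
    rw [show v + 1 + N - v = N + 1 by omega, ← hB]
    have : ((N + 1).choose j : ℝ) * ((N : ℝ) + 1 - j) = (N + 1) * N.choose j := by
      rcases Nat.lt_or_ge (N + 1) j with h | h
      · rw [Nat.choose_eq_zero_of_lt h, Nat.choose_eq_zero_of_lt (by omega)]; simp
      · have := Nat.add_one_mul_choose_eq N j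
        have h2 := Nat.choose_mul_succ_eq N j
        have h3 : ((N.choose j * (N + 1) : ℕ) : ℝ) = (((N+1).choose j * (N + 1 - j) : ℕ) : ℝ) := by rw [h2]
        push_cast [h] at h3
        linarith
    have h4 : ((N + 1).choose j : ℝ) * (1 - (j:ℝ) / ((N:ℝ) + 1)) = N.choose j := by
      field_simp
      linarith
    calc _ = (v.choose (k - j) : ℝ) * (((N + 1).choose j : ℝ) * (1 - (j:ℝ) / ((N:ℝ) + 1))) / B := by ring
      _ = _ := by rw [h4]
  have e2 : ∀ j, hyp (v + 1 + N) k v (j + 1) * (((j + 1 : ℕ) : ℝ) / ((N:ℝ) + 1)) = (v.choose (k - (j + 1)) : ℝ) * (N.choose j : ℝ) / B := by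
    intro j
    unfold hyp
    rw [show v + 1 + N - v = N + 1 by omega, ← hB]
    have h1 := Nat.add_one_mul_choose_eq N j
    have h3 : (((N + 1) * N.choose j : ℕ) : ℝ) = (((N+1).choose (j+1) * (j + 1) : ℕ) : ℝ) := by rw [h1]
    push_cast at h3
    have h4 : ((N + 1).choose (j+1) : ℝ) * (((j + 1 : ℕ) : ℝ) / ((N:ℝ) + 1)) = N.choose j := by
      push_cast
      field_simp
      linarith
    calc _ = (v.choose (k - (j + 1)) : ℝ) * (((N + 1).choose (j+1) : ℝ) * (((j + 1 : ℕ) : ℝ) / ((N:ℝ) + 1))) / B := by ring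
      _ = _ := by rw [h4]
  have e3 : ∀ j ∈ Finset.range k, hyp (v + 1 + N) k (v + 1) j = (v.choose (k - j) : ℝ) * (N.choose j : ℝ) / B + (v.choose (k - (j + 1)) : ℝ) * (N.choose j : ℝ) / B := by
    intro j hj
    rw [Finset.mem_range] at hj
    unfold hyp
    rw [show v + 1 + N - (v + 1) = N by omega, ← hB, show k - j = (k - (j+1)) + 1 by omega, Nat.choose_succ_succ]
    push_cast
    ring
  have e4 : hyp (v + 1 + N) k (v + 1) k = (v.choose (k - k) : ℝ) * (N.choose k : ℝ) / B := by
    unfold hyp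
    rw [show v + 1 + N - (v + 1) = N by omega, ← hB]
    simp
  simp_rw [mul_add, ← mul_assoc]
  rw [Finset.sum_add_distrib, Finset.sum_range_succ' (fun j => hyp (v + 1 + N) k v j * ((j:ℝ) / ((N:ℝ) + 1)) * q (j - 1))]
  simp_rw [e1, e2]
  rw [Finset.sum_range_succ, Finset.sum_range_succ (fun j => hyp (v + 1 + N) k (v + 1) j * q j), e4]
  rw [Finset.sum_congr rfl (fun j hj => by rw [e3 j hj] : ∀ j ∈ Finset.range k, hyp (v + 1 + N) k (v + 1) j * q j = _)]
  simp_rw [add_mul]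
  rw [Finset.sum_add_distrib]
  simp
  ring

lemma hyp_qv (k r n u : ℕ) (t : ℕ) : ∀ s, u + s + t ≤ n →
    ∑ j ∈ Finset.range (k + 1), hyp n k (u + s) j * qv k r n u s t j =
      ∑ j ∈ Finset.range (k + 1), hyp n k (u + s + t) j * (if j ≤ k - r + 1 then 1 else 0) := by
  induction t with
  | zero => intro s _; simp only [qv, add_zero]
  | succ t ih =>
    intro s hs
    simp_rw [qv_succ]
    have := hyp_step n k (u + s) (by omega) (fun j => qv k r n u (s + 1) t j)
    push_cast at this
    simp_rw [← sub_sub] at this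
    rw [this, show u + s + 1 = u + (s + 1) by omega, ih (s + 1) (by omega), show u + (s + 1) + t = u + s + (t + 1) by omega]

lemma xv_bound (k r n u : ℕ) (lam δ : ℝ) (hδ0 : 0 ≤ δ) (T : ℕ) (hP : ∀ s : ℕ, s < T →
      0 ≤ 1 / ((n : ℝ) - (u : ℝ) - (s : ℝ) - (k : ℝ) + (r : ℝ)) ∧
      1 / ((n : ℝ) - (u : ℝ) - (s : ℝ) - (k : ℝ) + (r : ℝ)) ≤ δ ∧
      1 / ((n : ℝ) - (u : ℝ) - (s : ℝ) - (k : ℝ) + (r : ℝ)) ≤ 1) (t : ℕ) :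
    ∀ s, s + t ≤ T → |xv k r n u lam s t - 1| ≤ |Real.exp lam - 1| ∧
      |xv k r n u lam s t - Real.exp lam| ≤ |Real.exp lam - 1| * (t * δ) := by
  induction t with
  | zero => intro s _; simp [xv]
  | succ t ih =>
    intro s hs
    obtain ⟨h1, h2⟩ := ih (s + 1) (by omega)
    obtain ⟨p0, pd, p1⟩ := hP s (by omega)
    rw [xv]
    generalize 1 / ((n : ℝ) - (u : ℝ) - (s : ℝ) - (k : ℝ) + (r : ℝ)) = p at *
    generalize xv k r n u lam (s + 1) t = x at *
    constructor
    · rw [show (1 - p) * x + p - 1 = (1 - p) * (x - 1) by ring, abs_mul, abs_of_nonneg (by linarith : 0 ≤ 1 - p)]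
      nlinarith [abs_nonneg (x - 1)]
    · rw [show (1 - p) * x + p - Real.exp lam = (x - Real.exp lam) + -(p * (x - 1)) by ring]
      refine (abs_add_le _ _).trans ?_
      rw [abs_neg, abs_mul, abs_of_nonneg p0]
      have : p * |x - 1| ≤ δ * |Real.exp lam - 1| := mul_le_mul pd h1 (abs_nonneg _) hδ0
      push_cast
      nlinarith

lemma pow_diff (x y M : ℝ) (hM : 1 ≤ M) (hx : |x| ≤ M) (hy : |y| ≤ M) (K : ℕ) :
    |x ^ K - y ^ K| ≤ K * M ^ K * |x - y| := by
  induction K with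
  | zero => simp
  | succ K ih =>
    rw [show x ^ (K + 1) - y ^ (K + 1) = x * (x ^ K - y ^ K) + y ^ K * (x - y) by ring]
    refine (abs_add_le _ _).trans ?_
    rw [abs_mul, abs_mul, abs_pow]
    have h1 : |x| * |x ^ K - y ^ K| ≤ M * (K * M ^ K * |x - y|) :=
      mul_le_mul hx ih (abs_nonneg _) (by linarith)
    have h2 : |y| ^ K ≤ M ^ K := pow_le_pow_left₀ (abs_nonneg _) hy K
    have h3 : M ^ K ≤ M ^ (K + 1) := pow_le_pow_right₀ hM (by omega)
    have h4 : |y| ^ K * |x - y| ≤ M ^ (K + 1) * |x - y| := mul_le_mul_of_nonneg_right (h2.trans h3) (abs_nonneg _)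
    push_cast
    calc _ ≤ M * (K * M ^ K * |x - y|) + M ^ (K + 1) * |x - y| := add_le_add h1 h4
      _ = _ := by ring

lemma wv_bound (k r n u : ℕ) (hr : 3 ≤ r) (hrk : r ≤ k) (lam D ε : ℝ) (T : ℕ) (hT : u + T + k ≤ n)
    (hx : ∀ s t : ℕ, s + t ≤ T → |xv k r n u lam s t ^ (k - r + 1) - 1 - D| ≤ ε) (t : ℕ) :
    ∀ s j, s + t ≤ T → k - r + 1 ≤ j → j ≤ k → 0 ≤ qv k r n u s t j ∧
      |wv k r n u lam s t j - 1 - D * qv k r n u s t j| ≤ ε * qv k r n u s t j := by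
  induction t with
  | zero =>
    intro s j hs hj hjk
    rcases hj.eq_or_lt with h | h
    · subst h
      rw [wv_small _ _ _ _ _ _ _ _ le_rfl, qv_small _ _ _ _ _ _ _ le_rfl]
      simpa using hx s 0 hs
    · rw [wv, qv, if_neg (by omega), if_neg (by omega)]; simp
  | succ t ih =>
    intro s j hs hj hjk
    rcases hj.eq_or_lt with h | h
    · subst h
      rw [wv_small _ _ _ _ _ _ _ _ le_rfl, qv_small _ _ _ _ _ _ _ le_rfl]
      simpa using hx s (t+1) hs
    · rw [wv, qv, if_neg (by omega), if_neg (by omega)]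
      obtain ⟨a1, a2⟩ := ih (s + 1) j (by omega) hj hjk
      obtain ⟨b1, b2⟩ := ih (s + 1) (j - 1) (by omega) (by omega) (by omega)
      have hden : (k : ℝ) ≤ (n : ℝ) - u - s := by
        have : u + s + k ≤ n := by omega
        have : ((u + s + k : ℕ) : ℝ) ≤ n := by exact_mod_cast this
        push_cast at this; linarith
      have hk0 : (0 : ℝ) < k := by
        have : 0 < k := by omega
        exact_mod_cast this
      have hjk' : (j : ℝ) ≤ k := by exact_mod_cast hjk
      have p0 : 0 ≤ (j : ℝ) / ((n : ℝ) - (u : ℝ) - (s : ℝ)) := div_nonneg (by positivity) (by linarith)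
      have p1 : (j : ℝ) / ((n : ℝ) - (u : ℝ) - (s : ℝ)) ≤ 1 := by
        rw [div_le_one (by linarith)]; linarith
      generalize (j : ℝ) / ((n : ℝ) - (u : ℝ) - (s : ℝ)) = p at *
      generalize qv k r n u (s + 1) t j = qa at *
      generalize qv k r n u (s + 1) t (j - 1) = qb at *
      generalize wv k r n u lam (s + 1) t j = wa at *
      generalize wv k r n u lam (s + 1) t (j - 1) = wb at *
      have p1' : 0 ≤ 1 - p := by linarith
      refine ⟨by positivity, ?_⟩
      rw [show (1 - p) * wa + p * wb - 1 - D * ((1 - p) * qa + p * qb) = (1 - p) * (wa - 1 - D * qa) + p * (wb - 1 - D * qb) by ring]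
      refine (abs_add_le _ _).trans ?_
      rw [abs_mul, abs_mul, abs_of_nonneg p0, abs_of_nonneg p1']
      nlinarith [mul_le_mul_of_nonneg_left a2 p1', mul_le_mul_of_nonneg_left b2 p0]

lemma A_bound (k r n u : ℕ) (hr : 3 ≤ r) (hrk : r ≤ k) (lam D ε M' : ℝ) (T : ℕ) (hT : u + T + k ≤ n)
    (hx : ∀ s t : ℕ, s + t ≤ T → |xv k r n u lam s t ^ (k - r + 1) - 1 - D| ≤ ε)
    (hM : ∀ j < k - r + 1, |xv k r n u lam 0 T ^ j - 1 - D| ≤ M') (hε : 0 ≤ ε) :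
    |(∑ j ∈ Finset.range (k + 1), hyp n k u j * wv k r n u lam 0 T j) - 1
        - D * ∑ j ∈ Finset.range (k - r + 2), hyp n k (u + T) j| ≤
      ε * (∑ j ∈ Finset.range (k - r + 2), hyp n k (u + T) j) + M' * ∑ j ∈ Finset.range (k - r + 1), hyp n k u j := by
  have hQ : ∑ j ∈ Finset.range (k - r + 2), hyp n k (u + T) j = ∑ j ∈ Finset.range (k + 1), hyp n k u j * qv k r n u 0 T j := by
    have := hyp_qv k r n u T 0 (by omega)
    rw [add_zero] at this
    rw [this]
    simp_rw [mul_ite, mul_one, mul_zero]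
    rw [← Finset.sum_filter]
    refine Finset.sum_congr ?_ fun _ _ => rfl
    ext j; simp only [Finset.mem_range, Finset.mem_filter]; omega
  have h1 := hyp_sum n k u (by omega) (by omega)
  have hS : M' * ∑ j ∈ Finset.range (k - r + 1), hyp n k u j = ∑ j ∈ Finset.range (k + 1), if j < k - r + 1 then M' * hyp n k u j else 0 := by
    rw [← Finset.sum_filter, Finset.mul_sum]
    refine Finset.sum_congr ?_ fun _ _ => rfl
    ext j; simp only [Finset.mem_range, Finset.mem_filter]; omega
  rw [hS, hQ]
  nth_rewrite 1 [← h1]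
  rw [Finset.mul_sum, ← Finset.sum_sub_distrib, ← Finset.sum_sub_distrib, Finset.mul_sum, ← Finset.sum_add_distrib]
  refine (Finset.abs_sum_le_sum_abs _ _).trans (Finset.sum_le_sum fun j hj => ?_)
  rw [Finset.mem_range] at hj
  have hh := hyp_nonneg n k u j
  rw [show hyp n k u j * wv k r n u lam 0 T j - hyp n k u j - D * (hyp n k u j * qv k r n u 0 T j) = 
    hyp n k u j * (wv k r n u lam 0 T j - 1 - D * qv k r n u 0 T j) by ring, abs_mul, abs_of_nonneg hh]
  split_ifs with h
  · rw [wv_small _ _ _ _ _ _ _ _ h.le, qv_small _ _ _ _ _ _ _ h.le, mul_one, mul_one]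
    have := mul_le_mul_of_nonneg_left (hM j h) hh
    nlinarith [mul_nonneg hε hh]
  · have := mul_le_mul_of_nonneg_left (wv_bound k r n u hr hrk lam D ε T hT hx T 0 j (by omega) (by omega) (by omega)).2 hh
    linarith

/-- ratio estimates -/
lemma hyp_eq (n v a b : ℕ) : hyp n (a + b) v b =
    ((a + b).choose a : ℝ) * ((v.descFactorial a : ℝ) * ((n - v).descFactorial b : ℝ) / (n.descFactorial (a + b) : ℝ)) := by
  unfold hyp
  rw [Nat.add_sub_cancel, Nat.descFactorial_eq_factorial_mul_choose, Nat.descFactorial_eq_factorial_mul_choose, Nat.descFactorial_eq_factorial_mul_choose]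
  have h := Nat.add_choose_mul_factorial_mul_factorial b a
  have h' : ((a + b).choose a : ℝ) * a.factorial * b.factorial = (a + b).factorial := by
    have h2 := Nat.choose_mul_factorial_mul_factorial (show a ≤ a + b by omega)
    rw [Nat.add_sub_cancel_left] at h2
    exact_mod_cast h2
  have h0 : ((a + b).factorial : ℝ) ≠ 0 := by positivity
  push_cast
  rw [← mul_div_assoc, show ((a + b).choose a : ℝ) * ((a.factorial : ℝ) * v.choose a * (b.factorial * (n - v).choose b)) =
    (((a + b).choose a : ℝ) * a.factorial * b.factorial) * (v.choose a * (n - v).choose b) by ring, h', mul_div_mul_left _ _ h0]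

lemma desc_lower (v a : ℕ) (h : a ≤ v) (hv : 0 < v) : (v : ℝ) ^ a * (1 - (a : ℝ) ^ 2 / v) ≤ v.descFactorial a := by
  have h1 := Nat.pow_sub_le_descFactorial v a
  have hv' : (0 : ℝ) < v := by exact_mod_cast hv
  have hav : (a : ℝ) ≤ v := by exact_mod_cast h
  have hd : (a : ℝ) / v ≤ 1 := by rw [div_le_one hv']; exact hav
  have h2 : ((v : ℝ) - a) ^ a ≤ v.descFactorial a := by
    have : ((v - a : ℕ) : ℝ) ^ a ≤ v.descFactorial a := by
      have : (v - a) ^ a ≤ v.descFactorial a := (Nat.pow_le_pow_left (by omega) a).trans h1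
      exact_mod_cast this
    rwa [Nat.cast_sub h] at this
  refine le_trans ?_ h2
  have h3 := one_add_mul_le_pow (a := -((a : ℝ) / v)) (by linarith) a
  have : (v : ℝ) - a = v * (1 + -((a : ℝ) / v)) := by field_simp; ring
  rw [this, mul_pow]
  refine mul_le_mul_of_nonneg_left (le_trans (le_of_eq ?_) h3) (by positivity)
  ring

set_option maxHeartbeats 1000000 in
lemma ratio_bound (n v a b : ℕ) (hv : 0 < v) (hav : a ≤ v) (hb : v + b ≤ n) (hn : 2 * (a + b) ^ 2 ≤ n) :
    |(v.descFactorial a : ℝ) * ((n - v).descFactorial b : ℝ) / (n.descFactorial (a + b) : ℝ) - ((v : ℝ) / n) ^ a|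
     ≤ ((v : ℝ) / n) ^ a * (2 * ((a : ℝ) + b + 1) ^ 2 * (1 / v + v / n)) := by
  have hn0 : 0 < n := by omega
  have hn' : (0 : ℝ) < n := by exact_mod_cast hn0
  have hv' : (0 : ℝ) < v := by exact_mod_cast hv
  have hvn : (v : ℝ) ≤ n := by exact_mod_cast (by omega : v ≤ n)
  have hk : a + b ≤ n := by omega
  have u1 : (v.descFactorial a : ℝ) ≤ (v : ℝ) ^ a := by exact_mod_cast Nat.descFactorial_le_pow v a
  have u2 : ((n - v).descFactorial b : ℝ) ≤ (n : ℝ) ^ b := by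
    exact_mod_cast (Nat.descFactorial_le_pow (n - v) b).trans (Nat.pow_le_pow_left (by omega) b)
  have u3 : (n.descFactorial (a + b) : ℝ) ≤ (n : ℝ) ^ (a + b) := by exact_mod_cast Nat.descFactorial_le_pow n (a + b)
  have l1 := desc_lower v a hav hv
  have l3 := desc_lower n (a + b) hk hn0
  have l2 : (n : ℝ) ^ b * (1 - (b : ℝ) * (v + b) / n) ≤ ((n - v).descFactorial b : ℝ) := by
    have h1 := Nat.pow_sub_le_descFactorial (n - v) b
    have h2 : ((n : ℝ) - v - b) ^ b ≤ (n - v).descFactorial b := by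
      have : ((n - v - b : ℕ) : ℝ) ^ b ≤ (n - v).descFactorial b := by
        exact_mod_cast (Nat.pow_le_pow_left (by omega) b).trans h1
      rwa [Nat.cast_sub (by omega), Nat.cast_sub (by omega)] at this
    refine le_trans ?_ h2
    have hvb : (v : ℝ) + b ≤ n := by exact_mod_cast hb
    have hd : ((v : ℝ) + b) / n ≤ 1 := by rw [div_le_one hn']; exact hvb
    have h3 := one_add_mul_le_pow (a := -(((v : ℝ) + b) / n)) (by linarith) b
    have : (n : ℝ) - v - b = n * (1 + -(((v : ℝ) + b) / n)) := by field_simp; ring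
    rw [this, mul_pow]
    refine mul_le_mul_of_nonneg_left (le_trans (le_of_eq ?_) h3) (by positivity)
    ring
  set k' : ℝ := (a : ℝ) + b with hk'
  have ca : (((a + b : ℕ)) : ℝ) = k' := by push_cast; rfl
  rw [ca] at l3
  have hnk : 2 * k' ^ 2 ≤ n := by rw [← ca]; exact_mod_cast hn
  have hy : k' ^ 2 / n ≤ 1 / 2 := by rw [div_le_iff₀ hn']; linarith
  have hy0 : 0 ≤ k' ^ 2 / n := by positivity
  have hDpos : (0 : ℝ) < n.descFactorial (a + b) := by
    exact_mod_cast Nat.descFactorial_pos.2 hk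
  have e0 : ((v : ℝ) / n) ^ a = (v : ℝ) ^ a * (n : ℝ) ^ b / (n : ℝ) ^ (a + b) := by
    rw [div_pow, pow_add]; field_simp
  have hinv : (1 : ℝ) / n ≤ 1 / v := one_div_le_one_div_of_le hv' hvn
  have hak : (a : ℝ) ≤ k' := by rw [hk']; linarith [(Nat.cast_nonneg b : (0:ℝ) ≤ b)]
  have hbk : (b : ℝ) ≤ k' := by rw [hk']; linarith [(Nat.cast_nonneg a : (0:ℝ) ≤ a)]
  have ha0 : (0 : ℝ) ≤ a := Nat.cast_nonneg a
  have hb0 : (0 : ℝ) ≤ b := Nat.cast_nonneg b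
  have hV : (0 : ℝ) ≤ (v : ℝ) ^ a * (n : ℝ) ^ b := by positivity
  have hvn0 : (0 : ℝ) ≤ (v : ℝ) / n := by positivity
  have hiv0 : (0 : ℝ) ≤ 1 / (v : ℝ) := by positivity
  have hin0 : (0 : ℝ) ≤ 1 / (n : ℝ) := by positivity
  have hPn : (0 : ℝ) < (n : ℝ) ^ (a + b) := by positivity
  rw [abs_le]
  constructor
  · -- lower bound
    have key : (v : ℝ) ^ a * (n : ℝ) ^ b * (1 - (2 * (k' + 1) ^ 2 * (1 / v + v / n))) ≤ (v.descFactorial a : ℝ) * ((n - v).descFactorial b : ℝ) := by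
      by_cases hneg : 1 - (2 * (k' + 1) ^ 2 * (1 / (v:ℝ) + v / n)) ≤ 0
      · exact (mul_nonpos_of_nonneg_of_nonpos hV hneg).trans (by positivity)
      · push Not at hneg
        have x1 : (a : ℝ) ^ 2 / v ≤ (k' + 1) ^ 2 * (1 / v) := by
          rw [div_eq_mul_one_div]
          exact mul_le_mul_of_nonneg_right (by nlinarith) hiv0
        have x2 : (b : ℝ) * (v + b) / n ≤ (k' + 1) ^ 2 * (1 / v + v / n) := by
          have : (b : ℝ) * (v + b) / n = b * (v / n) + b ^ 2 * (1 / n) := by field_simp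
          rw [this]
          have y1 : b * ((v:ℝ) / n) ≤ (k' + 1) ^ 2 * (v / n) := mul_le_mul_of_nonneg_right (by nlinarith) hvn0
          have y2 : (b:ℝ) ^ 2 * (1 / (n:ℝ)) ≤ (k' + 1) ^ 2 * (1 / v) := mul_le_mul (by nlinarith) hinv hin0 (by positivity)
          linarith
        have x10 : 0 ≤ (a : ℝ) ^ 2 / v := by positivity
        have x20 : 0 ≤ (b : ℝ) * (v + b) / n := by positivity
        have x3 : 0 ≤ (k' + 1) ^ 2 * ((v:ℝ) / n) := by positivity
        have x4 : 0 ≤ (k' + 1) ^ 2 * (1 / (v:ℝ)) := by positivity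
        have hexp : 2 * (k' + 1) ^ 2 * (1 / (v:ℝ) + v / n) = 2 * ((k' + 1) ^ 2 * (1 / (v:ℝ))) + 2 * ((k' + 1) ^ 2 * ((v:ℝ) / n)) := by ring
        have hexp2 : (k' + 1) ^ 2 * (1 / (v:ℝ) + v / n) = (k' + 1) ^ 2 * (1 / (v:ℝ)) + (k' + 1) ^ 2 * ((v:ℝ) / n) := by ring
        rw [hexp] at hneg
        rw [hexp2] at x2
        have z1 : 0 ≤ 1 - (a : ℝ) ^ 2 / v := by linarith
        have z2 : 0 ≤ 1 - (b : ℝ) * (v + b) / n := by linarith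
        calc _ ≤ (v : ℝ) ^ a * (n : ℝ) ^ b * ((1 - (a : ℝ) ^ 2 / v) * (1 - (b : ℝ) * (v + b) / n)) := by
              refine mul_le_mul_of_nonneg_left ?_ hV
              rw [hexp]
              have := mul_nonneg x10 x20
              have e : (1 - (a : ℝ) ^ 2 / v) * (1 - (b : ℝ) * (v + b) / n) = 1 - (a : ℝ) ^ 2 / v - (b : ℝ) * (v + b) / n + (a : ℝ) ^ 2 / v * ((b : ℝ) * (v + b) / n) := by ring
              rw [e]
              linarith
          _ = ((v : ℝ) ^ a * (1 - (a : ℝ) ^ 2 / v)) * ((n : ℝ) ^ b * (1 - (b : ℝ) * (v + b) / n)) := by ring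
          _ ≤ _ := mul_le_mul l1 l2 (by positivity) (by positivity)
    have : (v : ℝ) ^ a * (n : ℝ) ^ b * (1 - (2 * (k' + 1) ^ 2 * (1 / v + v / n))) / (n : ℝ) ^ (a + b) ≤ (v.descFactorial a : ℝ) * ((n - v).descFactorial b : ℝ) / (n.descFactorial (a + b) : ℝ) := by
      refine (div_le_div_of_nonneg_right key hPn.le).trans ?_
      exact div_le_div_of_nonneg_left (by positivity) hDpos u3
    rw [e0]
    have e1 : (v : ℝ) ^ a * (n : ℝ) ^ b * (1 - (2 * (k' + 1) ^ 2 * (1 / v + v / n))) / (n : ℝ) ^ (a + b) = (v : ℝ) ^ a * (n : ℝ) ^ b / (n : ℝ) ^ (a + b) - (v : ℝ) ^ a * (n : ℝ) ^ b / (n : ℝ) ^ (a + b) * (2 * (k' + 1) ^ 2 * (1 / v + v / n)) := by ring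
    linarith
  · have h1 : (v.descFactorial a : ℝ) * ((n - v).descFactorial b : ℝ) / (n.descFactorial (a + b) : ℝ) ≤
        (v : ℝ) ^ a * (n : ℝ) ^ b / ((n : ℝ) ^ (a + b) * (1 - k' ^ 2 / n)) := by
      refine div_le_div₀ hV (mul_le_mul u1 u2 (by positivity) (by positivity)) ?_ l3
      exact mul_pos hPn (by linarith)
    have h2 : 1 / (1 - k' ^ 2 / n) ≤ 1 + 2 * (k' ^ 2 / n) := by
      rw [div_le_iff₀ (by linarith)]
      nlinarith
    have h3 : k' ^ 2 / n ≤ (k' + 1) ^ 2 * (1 / v + v / n) := by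
      rw [div_eq_mul_one_div]
      exact mul_le_mul (by nlinarith) (by linarith) hin0 (by positivity)
    have h4 : (v : ℝ) ^ a * (n : ℝ) ^ b / ((n : ℝ) ^ (a + b) * (1 - k' ^ 2 / n)) = ((v : ℝ) / n) ^ a * (1 / (1 - k' ^ 2 / n)) := by
      rw [e0, div_mul_div_comm, mul_one]
    have h5 : ((v : ℝ) / n) ^ a * (1 / (1 - k' ^ 2 / n)) ≤ ((v : ℝ) / n) ^ a * (1 + 2 * ((k' + 1) ^ 2 * (1 / v + v / n))) :=
      mul_le_mul_of_nonneg_left (by linarith) (by positivity)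
    linarith

lemma A_bound2 (k r n u T : ℕ) (hr : 3 ≤ r) (hrk : r ≤ k) (lam : ℝ) (hn : 2 * (u + T + k) ≤ n) :
    |(∑ j ∈ Finset.range (k + 1), hyp n k u j * wv k r n u lam 0 T j) - 1
        - (Real.exp lam ^ (k - r + 1) - 1) * ∑ j ∈ Finset.range (k - r + 2), hyp n k (u + T) j| ≤
      (((k - r + 1 : ℕ) : ℝ) * (1 + |Real.exp lam - 1|) ^ (k - r + 1) * (|Real.exp lam - 1| * (T * (2 / n))))
         * (∑ j ∈ Finset.range (k - r + 2), hyp n k (u + T) j)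
       + ((1 + |Real.exp lam - 1|) ^ (k - r + 1) + 1 + |Real.exp lam ^ (k - r + 1) - 1|) * ∑ j ∈ Finset.range (k - r + 1), hyp n k u j := by
  have hn0 : 0 < n := by omega
  have hn' : (0 : ℝ) < n := by exact_mod_cast hn0
  have hx := xv_bound k r n u lam (2 / n) (by positivity) T (by
    intro s hs
    have hd : (n : ℝ) / 2 ≤ (n : ℝ) - (u : ℝ) - (s : ℝ) - (k : ℝ) + (r : ℝ) := by
      have : ((2 * (u + T + k) : ℕ) : ℝ) ≤ n := by exact_mod_cast hn
      have h2 : (s : ℝ) ≤ T := by exact_mod_cast hs.le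
      push_cast at this
      linarith [(Nat.cast_nonneg r : (0:ℝ) ≤ r)]
    have hd1 : (1 : ℝ) ≤ (n : ℝ) - (u : ℝ) - (s : ℝ) - (k : ℝ) + (r : ℝ) := by
      refine le_trans ?_ hd
      have : (2 : ℝ) ≤ n := by exact_mod_cast (by omega : 2 ≤ n)
      linarith
    refine ⟨by positivity, ?_, ?_⟩
    · rw [div_le_div_iff₀ (by linarith) hn']; linarith
    · rw [div_le_one (by linarith)]; exact hd1)
  set M : ℝ := 1 + |Real.exp lam - 1| with hM
  have hM1 : 1 ≤ M := by have := abs_nonneg (Real.exp lam - 1); linarith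
  have hMx : ∀ y : ℝ, |y - 1| ≤ |Real.exp lam - 1| → |y| ≤ M := by
    intro y hy
    have := abs_add_le (y - 1) 1
    rw [sub_add_cancel, abs_one] at this
    linarith
  refine A_bound k r n u hr hrk lam _ _ _ T (by omega) ?_ ?_ (by positivity)
  · intro s t hst
    obtain ⟨h1, h2⟩ := hx t s hst
    rw [show xv k r n u lam s t ^ (k - r + 1) - 1 - (Real.exp lam ^ (k - r + 1) - 1) = xv k r n u lam s t ^ (k - r + 1) - Real.exp lam ^ (k - r + 1) by ring]
    refine (pow_diff _ _ M hM1 (hMx _ h1) (hMx _ le_rfl) _).trans ?_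
    refine mul_le_mul_of_nonneg_left (h2.trans ?_) (by positivity)
    have : (t : ℝ) ≤ T := by exact_mod_cast (by omega : t ≤ T)
    gcongr
  · intro j hj
    obtain ⟨h1, h2⟩ := hx T 0 (by omega)
    have h3 : |xv k r n u lam 0 T ^ j| ≤ M ^ (k - r + 1) := by
      rw [abs_pow]
      exact (pow_le_pow_left₀ (abs_nonneg _) (hMx _ h1) j).trans (pow_le_pow_right₀ hM1 hj.le)
    refine (abs_sub _ _).trans ?_
    have := abs_sub (xv k r n u lam 0 T ^ j) 1
    rw [abs_one] at this
    linarith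

lemma hyp_est (n k v j : ℕ) (hj : j ≤ k) (hv : 0 < v) (hkv : k ≤ v) (hvn : v + k ≤ n) (hn : 2 * k ^ 2 ≤ n) :
    |hyp n k v j - (k.choose (k - j) : ℝ) * ((v : ℝ) / n) ^ (k - j)| ≤
      (k.choose (k - j) : ℝ) * (((v : ℝ) / n) ^ (k - j) * (2 * ((k : ℝ) + 1) ^ 2 * (1 / v + v / n))) := by
  obtain ⟨a, rfl⟩ : ∃ a, k = a + j := ⟨k - j, by omega⟩
  rw [Nat.add_sub_cancel, hyp_eq, ← mul_sub, abs_mul, abs_of_nonneg (Nat.cast_nonneg _)]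
  refine mul_le_mul_of_nonneg_left ?_ (Nat.cast_nonneg _)
  have := ratio_bound n v a j hv (by omega) (by omega) hn
  push_cast
  exact this

lemma hyp_small (n k v r : ℕ) (hr : 3 ≤ r) (hrk : r ≤ k) (hv : 0 < v) (hkv : k ≤ v) (hvn : v + k ≤ n) (hn : 2 * k ^ 2 ≤ n) :
    ∑ j ∈ Finset.range (k - r + 1), hyp n k v j ≤
     (k : ℝ) * (2 ^ k * (1 + 4 * ((k : ℝ) + 1) ^ 2)) * ((v : ℝ) / n) ^ r := by
  have hn0 : 0 < n := by omega
  have hn' : (0 : ℝ) < n := by exact_mod_cast hn0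
  have hv' : (1 : ℝ) ≤ v := by exact_mod_cast hv
  have hvn' : (v : ℝ) ≤ n := by exact_mod_cast (by omega : v ≤ n)
  have h1 : (1 : ℝ) / v ≤ 1 := by rw [div_le_one (by linarith)]; exact hv'
  have h2 : (v : ℝ) / n ≤ 1 := by rw [div_le_one hn']; exact hvn'
  have h20 : 0 ≤ (v : ℝ) / n := by positivity
  have hb : ∀ j ∈ Finset.range (k - r + 1), hyp n k v j ≤ (2 ^ k * (1 + 4 * ((k : ℝ) + 1) ^ 2)) * ((v : ℝ) / n) ^ r := by
    intro j hj
    rw [Finset.mem_range] at hj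
    have h := (abs_le.1 (hyp_est n k v j (by omega) hv hkv hvn hn)).2
    have hc : (k.choose (k - j) : ℝ) ≤ 2 ^ k := by exact_mod_cast Nat.choose_le_two_pow k (k - j)
    have hp : ((v : ℝ) / n) ^ (k - j) ≤ ((v : ℝ) / n) ^ r := pow_le_pow_of_le_one h20 h2 (by omega)
    have hq : 1 + 2 * ((k : ℝ) + 1) ^ 2 * (1 / v + v / n) ≤ 1 + 4 * ((k : ℝ) + 1) ^ 2 := by
      nlinarith [sq_nonneg ((k : ℝ) + 1)]
    calc hyp n k v j ≤ (k.choose (k - j) : ℝ) * (1 + 2 * ((k : ℝ) + 1) ^ 2 * (1 / v + v / n)) * ((v : ℝ) / n) ^ (k - j) := by linarith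
      _ ≤ _ := by gcongr
  refine (Finset.sum_le_card_nsmul _ _ _ hb).trans ?_
  rw [Finset.card_range, nsmul_eq_mul, mul_assoc (k : ℝ)]
  have : ((k - r + 1 : ℕ) : ℝ) ≤ k := by exact_mod_cast (by omega : k - r + 1 ≤ k)
  exact mul_le_mul_of_nonneg_right this (by positivity)

/-- Theorem `thm:LG`: for the lower-bound Markov chain with
`m = ⌈μ n^{r-1}/u(n)^{r-2}⌉`, for any constants `τ > 0` and `λ`,
`E[exp(λ E̲(⌊τ u(n)⌋))] = exp(φ_{k,r}(μ,λ,τ) u(n) + O(max{1, u(n)²/n}))`. -/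
theorem stmt14 (k r : ℕ) (hr : 3 ≤ r) (hrk : r ≤ k)
    (u : ℕ → ℕ) (hu : UGood u)
    (μ : ℝ) (hμ0 : 0 < μ)
    (m : ℕ → ℕ) (hm : ∀ n, m n = ⌈μ * (n : ℝ) ^ (r - 1) / (u n : ℝ) ^ (r - 2)⌉₊)
    (τ lam : ℝ) (hτ : 0 < τ) :
    ∃ C > (0 : ℝ), ∀ᶠ n in atTop,
      0 < lowerE k r n (u n) (m n) ⌊τ * (u n : ℝ)⌋₊
            (fun st : ℤ × (ℕ → ℕ) => Real.exp (lam * (st.1 : ℝ))) ∧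
      |Real.log (lowerE k r n (u n) (m n) ⌊τ * (u n : ℝ)⌋₊
            (fun st : ℤ × (ℕ → ℕ) => Real.exp (lam * (st.1 : ℝ))))
          - phiE k r μ lam τ * u n|
        ≤ C * max 1 ((u n : ℝ) ^ 2 / n) := by
  obtain ⟨hU, ha⟩ := hu
  set U : ℕ → ℝ := fun n => (u n : ℝ) with hUdef
  set a : ℕ → ℝ := fun n => (u n : ℝ) / (n : ℝ) with hadef
  set T : ℕ → ℕ := fun n => ⌊τ * (u n : ℝ)⌋₊ with hTdef
  set σ : ℝ := 1 + τ with hσ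
  set ρ : ℕ → ℝ := fun n => 1 / U n + a n with hρdef
  set V : ℕ → ℝ := fun n => ((u n + T n : ℕ) : ℝ) with hVdef
  set Q : ℕ → ℝ := fun n => ∑ j ∈ Finset.range (k - r + 2), hyp n k (u n + T n) j with hQdef
  set A : ℕ → ℝ := fun n => (∑ j ∈ Finset.range (k + 1), hyp n k (u n) j * wv k r n (u n) lam 0 (T n) j) - 1 with hAdef
  set D : ℝ := Real.exp lam ^ (k - r + 1) - 1 with hD
  set c0 : ℝ := (k.choose (r - 1) : ℝ) with hc0
  have hσ1 : 1 < σ := by linarith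
  -- basic eventual facts
  have hTle : ∀ n, (T n : ℝ) ≤ τ * U n := fun n => Nat.floor_le (by positivity)
  have hTge : ∀ n, τ * U n - 1 ≤ T n := fun n => (Nat.sub_one_lt_floor _).le
  have hVle : ∀ n, V n ≤ σ * U n := by
    intro n; have := hTle n; simp only [hVdef, hUdef] at *; push_cast; rw [hσ]; linarith
  have hVge : ∀ n, σ * U n - 1 ≤ V n := by
    intro n; have := hTge n; simp only [hVdef, hUdef] at *; push_cast; rw [hσ]; linarith
  have hUV : ∀ n, U n ≤ V n := by
    intro n; simp only [hVdef, hUdef]; push_cast; linarith [(Nat.cast_nonneg (T n) : (0:ℝ) ≤ T n)]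
  have evn : ∀ᶠ n : ℕ in atTop, (4 * k + 2 * k ^ 2 + 1 : ℕ) ≤ n := eventually_ge_atTop _
  have evU : ∀ᶠ n : ℕ in atTop, ((k + 1 : ℕ) : ℝ) ≤ U n := hU.eventually_ge_atTop _
  have eva : ∀ᶠ n : ℕ in atTop, a n < 1 / (4 * σ) := ha.eventually_lt_const (by positivity)
  have ev : ∀ᶠ n : ℕ in atTop, 0 < n ∧ 2 * k ^ 2 ≤ n ∧ k ≤ u n ∧ 0 < u n ∧ 2 * (u n + T n + k) ≤ n := by
    filter_upwards [evn, evU, eva] with n h1 h2 h3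
    have hn0 : 0 < n := by omega
    have hn' : (0 : ℝ) < n := by exact_mod_cast hn0
    have h2a : ((k + 1 : ℕ) : ℝ) ≤ (u n : ℝ) := h2
    have h2' : k + 1 ≤ u n := by exact_mod_cast h2a
    refine ⟨hn0, by omega, by omega, by omega, ?_⟩
    have h4 : σ * U n ≤ n / 4 := by
      have : U n / n < 1 / (4 * σ) := h3
      rw [div_lt_div_iff₀ hn' (by positivity)] at this
      linarith
    have h5 := hVle n
    have h6 : ((4 * k + 2 * k ^ 2 + 1 : ℕ) : ℝ) ≤ n := by exact_mod_cast h1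
    have h7 : ((2 * (u n + T n + k) : ℕ) : ℝ) ≤ n := by
      simp only [hVdef] at h5
      push_cast at h5 h6 ⊢
      nlinarith [sq_nonneg (k : ℝ)]
    exact_mod_cast h7
  have ha0 : ∀ n, 0 ≤ a n := fun n => by simp only [hadef]; positivity
  have hU0 : ∀ n, 0 ≤ U n := fun n => by simp only [hUdef]; positivity
  have hρ0 : ∀ n, 0 ≤ ρ n := fun n => add_nonneg (one_div_nonneg.2 (hU0 n)) (ha0 n)
  have haρ : ∀ n, a n ≤ ρ n := fun n => by
    have := one_div_nonneg.2 (hU0 n)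
    simp only [hρdef]; linarith
  have eva1 : ∀ᶠ n : ℕ in atTop, a n ≤ 1 := (ha.eventually_lt_const (by norm_num : (0:ℝ) < 1)).mono fun _ h => h.le
  have hρO1 : ρ =O[atTop] (fun _ => (1 : ℝ)) := by
    refine IsBigO.of_bound 2 ?_
    filter_upwards [eva1, evU] with n h1 h2
    rw [Real.norm_of_nonneg (hρ0 n)]
    have : 1 / U n ≤ 1 := by
      have h3 : (1 : ℝ) ≤ U n := by push_cast at h2; linarith [(Nat.cast_nonneg k : (0:ℝ) ≤ k)]
      rw [div_le_one (by linarith)]; exact h3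
    simp only [hρdef, norm_one]; linarith
  -- small sums
  have hVn : ∀ᶠ n : ℕ in atTop, V n / n ≤ σ * a n := by
    filter_upwards [ev] with n h
    have hn' : (0 : ℝ) < n := by exact_mod_cast h.1
    simp only [hadef]
    rw [← mul_div_assoc]
    exact div_le_div_of_nonneg_right (hVle n) hn'.le
  have bS : (fun n => ∑ j ∈ Finset.range (k - r + 1), hyp n k (u n) j) =O[atTop] (fun n => a n ^ r) := by
    refine IsBigO.of_bound ((k : ℝ) * (2 ^ k * (1 + 4 * ((k : ℝ) + 1) ^ 2))) ?_
    filter_upwards [ev] with n ⟨h1, h2, h3, h4, h5⟩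
    rw [Real.norm_of_nonneg (Finset.sum_nonneg fun j _ => hyp_nonneg _ _ _ _), Real.norm_of_nonneg (pow_nonneg (ha0 n) r)]
    exact hyp_small n k (u n) r hr hrk h4 h3 (by omega) h2
  have bS2 : (fun n => ∑ j ∈ Finset.range (k - r + 1), hyp n k (u n + T n) j) =O[atTop] (fun n => a n ^ r) := by
    refine IsBigO.of_bound ((k : ℝ) * (2 ^ k * (1 + 4 * ((k : ℝ) + 1) ^ 2)) * σ ^ r) ?_
    filter_upwards [ev, hVn] with n ⟨h1, h2, h3, h4, h5⟩ h6
    rw [Real.norm_of_nonneg (Finset.sum_nonneg fun j _ => hyp_nonneg _ _ _ _), Real.norm_of_nonneg (pow_nonneg (ha0 n) r)]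
    refine (hyp_small n k (u n + T n) r hr hrk (by omega) (by omega) (by omega) h2).trans ?_
    rw [mul_assoc _ (σ ^ r), ← mul_pow]
    refine mul_le_mul_of_nonneg_left (pow_le_pow_left₀ (by positivity) h6 r) (by positivity)
  have arρ : (fun n => a n ^ r) =O[atTop] (fun n => a n ^ (r - 1) * ρ n) := by
    refine IsBigO.of_bound 1 (Eventually.of_forall fun n => ?_)
    rw [Real.norm_of_nonneg (pow_nonneg (ha0 n) r), Real.norm_of_nonneg (mul_nonneg (pow_nonneg (ha0 n) _) (hρ0 n)), one_mul]
    rw [show r = (r - 1) + 1 by omega, pow_succ, Nat.add_sub_cancel]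
    exact mul_le_mul_of_nonneg_left (haρ n) (pow_nonneg (ha0 n) _)
  -- main term of Q
  have bK : (fun n => hyp n k (u n + T n) (k - r + 1) - c0 * (V n / n) ^ (r - 1)) =O[atTop] (fun n => a n ^ (r - 1) * ρ n) := by
    refine IsBigO.of_bound (c0 * (σ ^ (r - 1) * (2 * ((k : ℝ) + 1) ^ 2 * σ))) ?_
    filter_upwards [ev, hVn] with n ⟨h1, h2, h3, h4, h5⟩ h6
    rw [Real.norm_of_nonneg (mul_nonneg (pow_nonneg (ha0 n) _) (hρ0 n)), Real.norm_eq_abs]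
    have h := hyp_est n k (u n + T n) (k - r + 1) (by omega) (by omega) (by omega) (by omega) h2
    rw [show k - (k - r + 1) = r - 1 by omega] at h
    refine h.trans ?_
    have e : c0 * (σ ^ (r - 1) * (2 * ((k : ℝ) + 1) ^ 2 * σ)) * (a n ^ (r - 1) * ρ n) = c0 * ((σ * a n) ^ (r - 1) * (2 * ((k : ℝ) + 1) ^ 2 * (σ * ρ n))) := by
      rw [mul_pow]; ring
    rw [e]
    have hUpos : 0 < U n := by simp only [hUdef]; exact_mod_cast h4
    have hVpos : 0 < V n := lt_of_lt_of_le hUpos (hUV n)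
    have e2 : 1 / V n + V n / n ≤ σ * ρ n := by
      have := one_div_le_one_div_of_le hUpos (hUV n)
      have h8 : 1 / U n ≤ σ * (1 / U n) := le_mul_of_one_le_left (by positivity) hσ1.le
      simp only [hρdef, mul_add]
      linarith
    have hVn0 : 0 ≤ V n / n := by positivity
    change c0 * ((V n / n) ^ (r - 1) * (2 * ((k : ℝ) + 1) ^ 2 * (1 / V n + V n / n))) ≤ _
    gcongr
  have bV : (fun n => (V n / n) ^ (r - 1) - σ ^ (r - 1) * a n ^ (r - 1)) =O[atTop] (fun n => a n ^ (r - 1) * ρ n) := by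
    refine IsBigO.of_bound (((r - 1 : ℕ) : ℝ) * (σ + 1) ^ (r - 1)) ?_
    filter_upwards [ev] with n ⟨h1, h2, h3, h4, h5⟩
    rw [Real.norm_of_nonneg (mul_nonneg (pow_nonneg (ha0 n) _) (hρ0 n)), Real.norm_eq_abs]
    have hUpos : 0 < U n := by simp only [hUdef]; exact_mod_cast h4
    have hn' : (0 : ℝ) < n := by exact_mod_cast h1
    have e1 : V n / n = V n / U n * a n := by
      change V n / n = V n / U n * (U n / n)
      field_simp
    have e2 : |V n / U n - σ| ≤ 1 / U n := by
      rw [show V n / U n - σ = (V n - σ * U n) / U n by field_simp, abs_div, abs_of_pos hUpos]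
      refine div_le_div_of_nonneg_right ?_ hUpos.le
      rw [abs_le]; constructor <;> linarith [hVle n, hVge n]
    have e3 : |V n / U n| ≤ σ + 1 := by
      have hVpos : 0 < V n := lt_of_lt_of_le hUpos (hUV n)
      rw [abs_of_nonneg (by positivity), div_le_iff₀ hUpos]
      linarith [hVle n]
    have h := pow_diff (V n / U n) σ (σ + 1) (by linarith) e3 (by rw [abs_of_pos (by linarith)]; linarith) (r - 1)
    rw [e1, mul_pow, ← sub_mul, abs_mul, abs_of_nonneg (pow_nonneg (ha0 n) _)]
    have h9 : 1 / U n ≤ ρ n := by simp only [hρdef]; linarith [ha0 n]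
    calc _ ≤ ((r - 1 : ℕ) : ℝ) * (σ + 1) ^ (r - 1) * ρ n * a n ^ (r - 1) := by
          refine mul_le_mul_of_nonneg_right (h.trans ?_) (pow_nonneg (ha0 n) _)
          exact mul_le_mul_of_nonneg_left (e2.trans h9) (by positivity)
      _ = _ := by ring
  have bQ : (fun n => Q n - c0 * σ ^ (r - 1) * a n ^ (r - 1)) =O[atTop] (fun n => a n ^ (r - 1) * ρ n) := by
    have := ((bS2.trans arρ).add bK).add (bV.const_mul_left c0)
    refine this.congr_left fun n => ?_
    have e : Q n = (∑ j ∈ Finset.range (k - r + 1), hyp n k (u n + T n) j) + hyp n k (u n + T n) (k - r + 1) :=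
      Finset.sum_range_succ (fun j => hyp n k (u n + T n) j) (k - r + 1)
    rw [e]
    ring
  have bmain : (fun n => c0 * σ ^ (r - 1) * a n ^ (r - 1)) =O[atTop] (fun n => a n ^ (r - 1)) :=
    (isBigO_refl _ _).const_mul_left _
  have aρ1 : (fun n => a n ^ (r - 1) * ρ n) =O[atTop] (fun n => a n ^ (r - 1)) := by
    simpa using (isBigO_refl (fun n => a n ^ (r - 1)) atTop).mul hρO1
  have bQ1 : Q =O[atTop] (fun n => a n ^ (r - 1)) := by
    refine ((bQ.trans aρ1).add bmain).congr_left fun n => ?_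
    ring
  have hQ0 : ∀ n, 0 ≤ Q n := fun n => Finset.sum_nonneg fun j _ => hyp_nonneg _ _ _ _
  have bAQ : (fun n => A n - D * Q n) =O[atTop] (fun n => a n ^ (r - 1) * ρ n) := by
    set M : ℝ := 1 + |Real.exp lam - 1| with hM
    set C1 : ℝ := ((k - r + 1 : ℕ) : ℝ) * M ^ (k - r + 1) * (|Real.exp lam - 1| * (τ * 2)) with hC1
    set M' : ℝ := M ^ (k - r + 1) + 1 + |Real.exp lam ^ (k - r + 1) - 1| with hM'
    have hMpos : 0 ≤ M := by positivity
    have t1 : (fun n => A n - D * Q n) =O[atTop] (fun n => C1 * (a n * Q n) + M' * ∑ j ∈ Finset.range (k - r + 1), hyp n k (u n) j) := by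
      refine IsBigO.of_bound 1 ?_
      filter_upwards [ev] with n ⟨h1, h2, h3, h4, h5⟩
      have h := A_bound2 k r n (u n) (T n) hr hrk lam h5
      have hn' : (0 : ℝ) < n := by exact_mod_cast h1
      rw [Real.norm_eq_abs, Real.norm_eq_abs, one_mul]
      refine (h.trans ?_).trans (le_abs_self _)
      refine add_le_add ?_ le_rfl
      change _ * Q n ≤ _
      have e : C1 * (a n * Q n) = ((k - r + 1 : ℕ) : ℝ) * M ^ (k - r + 1) * (|Real.exp lam - 1| * ((τ * U n) * (2 / n))) * Q n := by
        rw [hC1]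
        change _ * (U n / n * Q n) = _
        ring
      rw [e]
      refine mul_le_mul_of_nonneg_right ?_ (hQ0 n)
      have e3 : (T n : ℝ) * (2 / n) ≤ (τ * U n) * (2 / n) := mul_le_mul_of_nonneg_right (hTle n) (by positivity)
      have e4 := mul_le_mul_of_nonneg_left e3 (by positivity : 0 ≤ ((k - r + 1 : ℕ) : ℝ) * M ^ (k - r + 1) * |Real.exp lam - 1|)
      refine le_trans (le_of_eq ?_) (e4.trans (le_of_eq ?_))
      · ring
      · ring
    refine t1.trans ?_
    have t2 : (fun n => a n * Q n) =O[atTop] (fun n => a n ^ r) := by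
      refine ((isBigO_refl a atTop).mul bQ1).congr_right fun n => ?_
      rw [← pow_succ', show r - 1 + 1 = r by omega]
    exact ((t2.trans arρ).const_mul_left C1).add ((bS.trans arρ).const_mul_left M')
  have bA : (fun n => A n - D * (c0 * σ ^ (r - 1)) * a n ^ (r - 1)) =O[atTop] (fun n => a n ^ (r - 1) * ρ n) := by
    refine (bAQ.add (bQ.const_mul_left D)).congr_left fun n => ?_
    ring
  have bA1 : A =O[atTop] (fun n => a n ^ (r - 1)) := by
    refine ((bA.trans aρ1).add ((isBigO_refl (fun n => a n ^ (r - 1)) atTop).const_mul_left (D * (c0 * σ ^ (r - 1))))).congr_left fun n => ?_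
    ring
  have hA0 : Tendsto A atTop (nhds 0) := by
    refine bA1.trans_tendsto ?_
    have := ha.pow (r - 1)
    rwa [zero_pow (by omega)] at this
  -- m
  have bm : (fun n => (m n : ℝ) * a n ^ (r - 1) - μ * U n) =O[atTop] (fun _ => (1 : ℝ)) := by
    refine IsBigO.of_bound 1 ?_
    filter_upwards [ev, eva1] with n ⟨h1, h2, h3, h4, h5⟩ h6
    have hUpos : 0 < U n := by simp only [hUdef]; exact_mod_cast h4
    have hn' : (0 : ℝ) < n := by exact_mod_cast h1
    have e : μ * U n = (μ * (n : ℝ) ^ (r - 1) / U n ^ (r - 2)) * a n ^ (r - 1) := by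
      change μ * U n = (μ * (n : ℝ) ^ (r - 1) / U n ^ (r - 2)) * (U n / n) ^ (r - 1)
      rw [div_pow]
      have : U n ^ (r - 1) = U n ^ (r - 2) * U n := by rw [← pow_succ]; congr 1; omega
      rw [this]
      field_simp
    have c1 : μ * (n : ℝ) ^ (r - 1) / U n ^ (r - 2) ≤ m n := by rw [hm n]; exact Nat.le_ceil _
    have c2 : (m n : ℝ) < μ * (n : ℝ) ^ (r - 1) / U n ^ (r - 2) + 1 := by
      rw [hm n]; exact Nat.ceil_lt_add_one (by positivity)
    rw [e, ← sub_mul, norm_mul, Real.norm_eq_abs, Real.norm_eq_abs, abs_of_nonneg (pow_nonneg (ha0 n) _), abs_of_nonneg (by linarith)]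
    have hp := pow_le_one₀ (n := r - 1) (ha0 n) h6
    have hp0 := pow_nonneg (ha0 n) (r - 1)
    rw [norm_one, mul_one]
    exact mul_le_one₀ (by linarith) hp0 hp
  have b1U : (fun _ : ℕ => (1 : ℝ)) =O[atTop] U := by
    refine IsBigO.of_bound 1 ?_
    filter_upwards [evU] with n h
    rw [Real.norm_of_nonneg (hU0 n), norm_one, one_mul]
    push_cast at h; linarith [(Nat.cast_nonneg k : (0:ℝ) ≤ k)]
  have bm1 : (fun n => (m n : ℝ) * a n ^ (r - 1)) =O[atTop] U := by
    refine ((bm.trans b1U).add ((isBigO_refl U atTop).const_mul_left μ)).congr_left fun n => ?_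
    ring
  -- target
  set G : ℕ → ℝ := fun n => max 1 ((u n : ℝ) ^ 2 / n) with hG
  have hG1 : ∀ n, 1 ≤ G n := fun n => le_max_left _ _
  have hG2 : ∀ n, U n * a n ≤ G n := fun n => by
    refine le_trans (le_of_eq ?_) (le_max_right _ _)
    simp only [hUdef, hadef]; ring
  have b1G : (fun _ : ℕ => (1 : ℝ)) =O[atTop] G := by
    refine IsBigO.of_bound 1 (Eventually.of_forall fun n => ?_)
    rw [Real.norm_of_nonneg (by linarith [hG1 n] : 0 ≤ G n), norm_one, one_mul]; exact hG1 n
  have bUaG : (fun n => U n * a n) =O[atTop] G := by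
    refine IsBigO.of_bound 1 (Eventually.of_forall fun n => ?_)
    rw [Real.norm_of_nonneg (by linarith [hG1 n] : 0 ≤ G n), Real.norm_of_nonneg (mul_nonneg (hU0 n) (ha0 n)), one_mul]; exact hG2 n
  have bUρG : (fun n => U n * ρ n) =O[atTop] G := by
    refine (b1G.add bUaG).congr' ?_ EventuallyEq.rfl
    filter_upwards [ev] with n ⟨h1, h2, h3, h4, h5⟩
    have hUpos : 0 < U n := by simp only [hUdef]; exact_mod_cast h4
    simp only [hρdef, mul_add]
    rw [mul_one_div_cancel hUpos.ne']
  have f1 : (fun n => (m n : ℝ) * A n - D * (c0 * σ ^ (r - 1)) * μ * U n) =O[atTop] G := by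
    have g1 := (((isBigO_refl (fun n => (m n : ℝ)) atTop).mul bA).congr_right (fun n => (mul_assoc (m n : ℝ) (a n ^ (r - 1)) (ρ n)).symm)).trans (bm1.mul (isBigO_refl ρ atTop))
    have g2 := (bm.trans b1G).const_mul_left (D * (c0 * σ ^ (r - 1)))
    refine ((g1.trans bUρG).add g2).congr_left fun n => ?_
    ring
  have f2 : (fun n => (m n : ℝ) * (Real.log (1 + A n) - A n)) =O[atTop] G := by
    have g1 : (fun n => Real.log (1 + A n) - A n) =O[atTop] (fun n => A n * A n) := by
      refine IsBigO.of_bound 2 ?_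
      have : ∀ᶠ n in atTop, |A n| < 1 / 2 := by
        have := hA0.abs
        rw [abs_zero] at this
        exact this.eventually_lt_const (by norm_num)
      filter_upwards [this] with n h
      have h2 := Real.abs_log_sub_add_sum_range_le (x := - A n) (by rw [abs_neg]; linarith) 1
      simp only [Finset.sum_range_one, abs_neg, sub_neg_eq_add] at h2
      norm_num at h2
      rw [Real.norm_eq_abs, Real.norm_eq_abs, abs_mul_self, show Real.log (1 + A n) - A n = -A n + Real.log (1 + A n) by ring]
      refine h2.trans ?_
      rw [div_le_iff₀ (by linarith)]
      nlinarith [sq_nonneg (A n)]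
    have g2 : (fun n => A n * A n) =O[atTop] (fun n => a n ^ (r - 1) * a n) := by
      refine bA1.mul (bA1.trans ?_)
      refine IsBigO.of_bound 1 ?_
      filter_upwards [eva1] with n h
      rw [Real.norm_of_nonneg (ha0 n), Real.norm_of_nonneg (pow_nonneg (ha0 n) _), one_mul]
      exact pow_le_of_le_one (ha0 n) h (by omega)
    have g3 := ((isBigO_refl (fun n => (m n : ℝ)) atTop).mul (g1.trans g2)).congr_right (fun n => (mul_assoc (m n : ℝ) (a n ^ (r - 1)) (a n)).symm)
    exact (g3.trans (bm1.mul (isBigO_refl a atTop))).trans bUaG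
  have f3 : (fun n => lam * (τ * U n - T n)) =O[atTop] G := by
    refine IsBigO.const_mul_left (IsBigO.trans ?_ b1G) lam
    refine IsBigO.of_bound 1 (Eventually.of_forall fun n => ?_)
    rw [norm_one, mul_one, Real.norm_eq_abs, abs_le]
    constructor <;> linarith [hTle n, hTge n]
  obtain ⟨C, hC, hb⟩ := ((f1.add f2).add f3).exists_pos
  refine ⟨C, hC, ?_⟩
  have hApos : ∀ᶠ n in atTop, 0 < 1 + A n := by
    filter_upwards [hA0.eventually_const_lt (by norm_num : (-1 : ℝ) < 0)] with n h
    linarith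
  filter_upwards [hb.bound, hApos, ev] with n hb1 hp ⟨h1, h2, h3, h4, h5⟩
  have hform := lowerE_formula k r n (u n) (m n) hr hrk (by omega) lam (T n)
  have e1 : (∑ j ∈ Finset.range (k + 1), hyp n k (u n) j * wv k r n (u n) lam 0 (T n) j) = 1 + A n := by
    simp only [hAdef]; ring
  rw [e1] at hform
  change 0 < lowerE k r n (u n) (m n) (T n) _ ∧ |Real.log (lowerE k r n (u n) (m n) (T n) _) - _| ≤ _
  rw [hform]
  refine ⟨by positivity, ?_⟩
  rw [Real.log_mul (Real.exp_pos _).ne' (by positivity), Real.log_exp, Real.log_pow]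
  rw [Real.norm_of_nonneg (by linarith [hG1 n] : 0 ≤ G n), Real.norm_eq_abs] at hb1
  refine le_trans (le_of_eq ?_) hb1
  congr 1
  have eD : Real.exp (((k : ℝ) - (r : ℝ) + 1) * lam) - 1 = D := by
    rw [hD, ← Real.exp_nat_mul]
    push_cast [hrk]
    rfl
  unfold phiE
  rw [eD]
  change _ - (μ * D * c0 * σ ^ (r - 1) - lam * τ) * U n = _
  ring
end
end
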